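/- arXiv:1807.07045 — 2 statements merged into one kernel-verified Lean document; each statement's English description precedes it below -/
import Mathlib

section
/- Let k₀ be a field of characteristic ≠ 2, b, c ∈ k₀ˣ with b not a square, and suppose that in the Witt ring W(k₀) one has ⟨⟨ν, b+1⟩⟩ ∈ ⟨⟨b⟩⟩·W(k₀) and ⟨c,−ν⟩⊗⟨⟨b+c²⟩⟩ ∈ ⟨⟨b⟩⟩·W(k₀) for some ν ∈ k₀ˣ. Then c ∈ (k₀ˣ ∩ D_{k₀(√b)}(⟨⟨b+1⟩⟩)) · (k₀ˣ ∩ D_{k₀(√b)}(⟨⟨b+c²⟩⟩)). -/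
open scoped BigOperators

/-- The diagonal quadratic form with weights `w`, as a function on `ι → K`. -/
def diagQF {K : Type} [Field K] {ι : Type} [Fintype ι] (w : ι → K) : (ι → K) → K :=
  fun v => ∑ i, w i * v i ^ 2

/-- `c` is a value represented by the diagonal quadratic form with weights `w`. -/
def RepresentsQF {K : Type} [Field K] {ι : Type} [Fintype ι] (w : ι → K) (c : K) : Prop :=
  ∃ v, diagQF w v = c

/-- Isometry (isomorphism) of diagonal quadratic forms. -/
def QFEquiv (K : Type) [Field K] {ι κ : Type} [Fintype ι] [Fintype κ]
    (w : ι → K) (w' : κ → K) : Prop :=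
  ∃ e : (ι → K) ≃ₗ[K] (κ → K), ∀ v, diagQF w' (e v) = diagQF w v

/-- Scaling a diagonal quadratic form by `c` : the form `⟨c⟩·q`. -/
def smulW {K : Type} [Field K] {ι : Type} (c : K) (w : ι → K) : ι → K := fun i => c * w i

/-- Tensor product of diagonal quadratic forms. -/
def tensorW {K : Type} [Field K] {ι κ : Type} (w₁ : ι → K) (w₂ : κ → K) : ι × κ → K :=
  fun p => w₁ p.1 * w₂ p.2

/-- The 1-fold Pfister form `⟨⟨a⟩⟩ = ⟨1, -a⟩`. -/
def pf1 {K : Type} [Field K] (a : K) : Fin 2 → K := ![1, -a]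

/-- The 2-fold Pfister form `⟨⟨a, d⟩⟩ = ⟨1,-a⟩ ⊗ ⟨1,-d⟩`. -/
def pf2 {K : Type} [Field K] (a d : K) : Fin 2 × Fin 2 → K := tensorW (pf1 a) (pf1 d)

/-- The n-fold Pfister form `⟨⟨a 0, …, a (n-1)⟩⟩`. -/
def pfW {K : Type} [Field K] {n : ℕ} (a : Fin n → K) : (Fin n → Fin 2) → K :=
  fun f => ∏ i, if f i = 0 then 1 else -a i

/-- Orthogonal sum of diagonal quadratic forms. -/
def orthW {K : Type} [Field K] {ι κ : Type} (w₁ : ι → K) (w₂ : κ → K) : ι ⊕ κ → K :=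
  Sum.elim w₁ w₂

/-- The weights of an orthogonal sum of `m` hyperbolic planes. -/
def hypW (K : Type) [Field K] (m : ℕ) : Fin m ⊕ Fin m → K :=
  Sum.elim (fun _ => 1) (fun _ => -1)

/-- Witt equivalence of diagonal quadratic forms: they become isometric after
adding hyperbolic planes. -/
def WittEquiv (K : Type) [Field K] {ι κ : Type} [Fintype ι] [Fintype κ]
    (w : ι → K) (w' : κ → K) : Prop :=
  ∃ m m' : ℕ, QFEquiv K (orthW w (hypW K m)) (orthW w' (hypW K m'))

/-- A diagonal quadratic form is anisotropic. -/
def AnisotropicQF {K : Type} [Field K] {ι : Type} [Fintype ι] (w : ι → K) : Prop :=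
  ∀ v, diagQF w v = 0 → v = 0

/-- Base change of a diagonal quadratic form along a field extension. -/
def bcW {k K : Type} [Field k] [Field K] [Algebra k K] {ι : Type} (w : ι → k) : ι → K :=
  fun i => algebraMap k K (w i)

/-!
Over an extension `K` containing a square root of `b`, every multiple of `⟨⟨b⟩⟩` is metabolic. Being
metabolic is a Witt invariant of nondegenerate forms, so `⟨a, -ν⟩ ⊗ ⟨⟨d⟩⟩` is metabolic over `K` as
soon as it lies in `⟨⟨b⟩⟩·W(k)`. If `⟨⟨d⟩⟩` is anisotropic over `K`, then a Lagrangian of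
`a⟨⟨d⟩⟩ ⊥ -ν⟨⟨d⟩⟩` meets the first summand trivially, hence projects onto the second one, and so
`a⟨⟨d⟩⟩` represents the value `ν` of `ν⟨⟨d⟩⟩`; if `⟨⟨d⟩⟩` is isotropic, then it is universal. Either
way `⟨⟨d⟩⟩` represents `ν / a`. Applied with `a = 1` and `a = c`, this yields the factorization
`c = ν * (c / ν)`, the values of a quadratic form being stable under inversion.
-/

open LinearMap (BilinForm)
open Module (finrank)

section Metabolic

variable {K V V' V₁ V₂ : Type*} [Field K] [AddCommGroup V] [Module K V] [AddCommGroup V']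
  [Module K V'] [AddCommGroup V₁] [Module K V₁] [AddCommGroup V₂] [Module K V₂]

/-- A bilinear form on a finite-dimensional space is metabolic if some totally isotropic subspace
has at least half the dimension of the space. A nondegenerate quadratic form of characteristic
other than `2` is hyperbolic exactly when its polar form is metabolic. -/
def IsMetabolic (B : BilinForm K V) : Prop :=
  ∃ L : Submodule K V, L ≤ B.orthogonal L ∧ finrank K V ≤ 2 * finrank K L

/-- The orthogonal sum of two bilinear forms, on the product of the underlying spaces. -/
def bilinProd (B₁ : BilinForm K V₁) (B₂ : BilinForm K V₂) : BilinForm K (V₁ × V₂) :=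
  B₁.comp (.fst K V₁ V₂) (.fst K V₁ V₂) + B₂.comp (.snd K V₁ V₂) (.snd K V₁ V₂)

theorem bilinProd_apply (B₁ : BilinForm K V₁) (B₂ : BilinForm K V₂) (x y : V₁ × V₂) :
    bilinProd B₁ B₂ x y = B₁ x.1 y.1 + B₂ x.2 y.2 :=
  rfl

theorem nondegenerate_bilinProd [FiniteDimensional K V₁] [FiniteDimensional K V₂]
    {B₁ : BilinForm K V₁} {B₂ : BilinForm K V₂} (h₁ : B₁.Nondegenerate) (h₂ : B₂.Nondegenerate) :
    (bilinProd B₁ B₂).Nondegenerate := by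
  refine .ofSeparatingLeft fun x hx ↦ Prod.ext (h₁.1 _ fun y ↦ ?_) (h₂.1 _ fun y ↦ ?_)
  · simpa [bilinProd_apply] using hx (y, 0)
  · simpa [bilinProd_apply] using hx (0, y)

theorem orthogonal_bilinProd_map_inr (B₁ : BilinForm K V₁) (B₂ : BilinForm K V₂)
    (L : Submodule K V₂) :
    (bilinProd B₁ B₂).orthogonal (L.map (.inr K V₁ V₂)) =
      (B₂.orthogonal L).comap (.snd K V₁ V₂) := by
  ext x
  simp [bilinProd_apply, LinearMap.BilinForm.mem_orthogonal_iff, -Submodule.map_inr]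

theorem finrank_map_add_finrank_inf_ker [FiniteDimensional K V] (f : V →ₗ[K] V')
    (S : Submodule K V) :
    finrank K (S.map f) + finrank K ↥(S ⊓ f.ker) = finrank K S := by
  rw [← (f.domRestrict S).finrank_range_add_finrank_ker, LinearMap.range_domRestrict,
    LinearMap.ker_domRestrict, ← Submodule.map_comap_subtype, Submodule.finrank_map_subtype_eq]

theorem finrank_add_finrank_inf_le [FiniteDimensional K V] {B : BilinForm K V}
    (hB : B.Nondegenerate) {E : Submodule K V} (hE : E ≤ B.orthogonal E) (L : Submodule K V) :
    finrank K E + finrank K ↥(E ⊓ L) ≤ finrank K ↥(E ⊓ B.orthogonal L) + finrank K L := by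
  have hsup : E ⊔ B.orthogonal L ≤ B.orthogonal (E ⊓ L) :=
    sup_le (hE.trans (B.orthogonal_le inf_le_left)) (B.orthogonal_le inf_le_right)
  have := Submodule.finrank_mono hsup
  have := Submodule.finrank_sup_add_finrank_inf_eq E (B.orthogonal L)
  have := B.finrank_orthogonal hB L
  have := B.finrank_orthogonal hB (E ⊓ L)
  have := L.finrank_le
  have := (E ⊓ L).finrank_le
  lia

namespace IsMetabolic

theorem of_injective {E : Type*} [AddCommGroup E] [Module K E] {B : BilinForm K V}
    (f : E →ₗ[K] V) (hf : Function.Injective f) (hB : ∀ x y, B (f x) (f y) = 0)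
    (hdim : finrank K V ≤ 2 * finrank K E) : IsMetabolic B := by
  refine ⟨f.range, ?_, by rwa [LinearMap.finrank_range_of_inj hf]⟩
  rintro _ ⟨y, rfl⟩ _ ⟨x, rfl⟩
  exact hB x y

theorem comp_equiv {B : BilinForm K V} (h : IsMetabolic B) (e : V' ≃ₗ[K] V) :
    IsMetabolic (B.comp e.toLinearMap e.toLinearMap) := by
  obtain ⟨L, hL, hdim⟩ := h
  refine of_injective (e.symm.toLinearMap ∘ₗ L.subtype)
    (e.symm.injective.comp L.injective_subtype) (fun x y ↦ ?_) (by rwa [e.finrank_eq])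
  simpa using hL y.2 x x.2

theorem of_comp_equiv {B : BilinForm K V} (e : V' ≃ₗ[K] V)
    (h : IsMetabolic (B.comp e.toLinearMap e.toLinearMap)) : IsMetabolic B := by
  have h' := h.comp_equiv e.symm
  rwa [LinearMap.BilinForm.comp_comp, LinearEquiv.comp_symm, LinearMap.BilinForm.comp_id_id] at h'

theorem exists_orthogonal_eq [FiniteDimensional K V] {B : BilinForm K V} (h : IsMetabolic B)
    (hB : B.Nondegenerate) :
    ∃ L : Submodule K V, B.orthogonal L = L ∧ 2 * finrank K L = finrank K V := by
  obtain ⟨L, hL, hdim⟩ := h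
  have := B.finrank_orthogonal hB L
  have := Submodule.finrank_mono hL
  exact ⟨L, (Submodule.eq_of_le_of_finrank_le hL (by lia)).symm, by lia⟩

variable [FiniteDimensional K V₁] [FiniteDimensional K V₂]
  {B₁ : BilinForm K V₁} {B₂ : BilinForm K V₂}

theorem prod (h₁ : IsMetabolic B₁) (h₂ : IsMetabolic B₂) : IsMetabolic (bilinProd B₁ B₂) := by
  obtain ⟨L₁, hL₁, hdim₁⟩ := h₁
  obtain ⟨L₂, hL₂, hdim₂⟩ := h₂
  refine of_injective (L₁.subtype.prodMap L₂.subtype)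
    (L₁.injective_subtype.prodMap L₂.injective_subtype) (fun x y ↦ ?_) ?_
  · rw [bilinProd_apply]
    exact (congrArg₂ _ (hL₁ y.1.2 _ x.1.2) (hL₂ y.2.2 _ x.2.2)).trans (add_zero 0)
  · rw [Module.finrank_prod, Module.finrank_prod]
    lia

theorem of_prod (hB₁ : B₁.Nondegenerate) (hB₂ : B₂.Nondegenerate) (h₂ : IsMetabolic B₂)
    (h : IsMetabolic (bilinProd B₁ B₂)) : IsMetabolic B₁ := by
  obtain ⟨L, hL, hdimL⟩ := h₂.exists_orthogonal_eq hB₂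
  obtain ⟨E, hE, hdimE⟩ := h
  -- `S` is the part of `E` lying in `V₁ × L`, the orthogonal complement of `0 × L`.
  set S := E ⊓ L.comap (.snd K V₁ V₂) with hS
  have hS_isotropic : S.map (.fst K V₁ V₂) ≤ B₁.orthogonal (S.map (.fst K V₁ V₂)) := by
    rintro _ ⟨y, ⟨hyE, hyL⟩, rfl⟩ _ ⟨x, ⟨hxE, hxL⟩, rfl⟩
    have hxy : B₁ x.1 y.1 + B₂ x.2 y.2 = 0 := hE hyE x hxE
    have hxy₂ : B₂ x.2 y.2 = 0 := hL.ge hyL x.2 hxL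
    rwa [hxy₂, add_zero] at hxy
  have hker : S ⊓ (LinearMap.fst K V₁ V₂).ker ≤ E ⊓ L.map (.inr K V₁ V₂) :=
    fun x ⟨⟨hxE, hxL⟩, hx⟩ ↦ ⟨hxE, x.2, hxL, Prod.ext hx.symm rfl⟩
  have hcount := finrank_add_finrank_inf_le (nondegenerate_bilinProd hB₁ hB₂) hE
    (L.map (.inr K V₁ V₂))
  rw [orthogonal_bilinProd_map_inr, hL, ← hS] at hcount
  have := finrank_map_add_finrank_inf_ker (.fst K V₁ V₂) S
  have := Submodule.finrank_mono hker
  have := Submodule.finrank_map_le (.inr K V₁ V₂) L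
  rw [Module.finrank_prod] at hdimE
  exact ⟨S.map (.fst K V₁ V₂), hS_isotropic, by lia⟩

end IsMetabolic
end Metabolic

section DiagonalForms

open scoped Matrix

variable {K ι κ : Type} [Field K]

/-- The symmetric bilinear form `(x, y) ↦ ∑ i, w i * x i * y i` whose values on the diagonal are
those of the quadratic form `diagQF w`. -/
def diagBilin [Fintype ι] (w : ι → K) : BilinForm K (ι → K) :=
  ∑ i, w i • LinearMap.BilinForm.linMulLin (.proj i) (.proj i)

theorem orthW_ne_zero {w : ι → K} {w' : κ → K} (hw : ∀ i, w i ≠ 0) (hw' : ∀ j, w' j ≠ 0) :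
    ∀ i, orthW w w' i ≠ 0 :=
  Sum.rec hw hw'

theorem tensorW_ne_zero {w : ι → K} {w' : κ → K} (hw : ∀ i, w i ≠ 0) (hw' : ∀ j, w' j ≠ 0) :
    ∀ i, tensorW w w' i ≠ 0 :=
  fun i ↦ mul_ne_zero (hw i.1) (hw' i.2)

theorem pf1_ne_zero {a : K} (ha : a ≠ 0) : ∀ i, pf1 a i ≠ 0 :=
  Fin.forall_fin_two.2 ⟨one_ne_zero, neg_ne_zero.2 ha⟩

theorem hypW_ne_zero (m : ℕ) : ∀ i, hypW K m i ≠ 0 :=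
  Sum.rec (fun _ ↦ one_ne_zero) (fun _ ↦ neg_ne_zero.2 one_ne_zero)

section BaseChange

variable {k : Type} [Field k] [Algebra k K]

theorem bcW_orthW (w : ι → k) (w' : κ → k) :
    bcW (K := K) (orthW w w') = orthW (bcW w) (bcW w') :=
  funext <| Sum.rec (fun _ ↦ rfl) (fun _ ↦ rfl)

theorem bcW_tensorW (w : ι → k) (w' : κ → k) :
    bcW (K := K) (tensorW w w') = tensorW (bcW w) (bcW w') :=
  funext fun _ ↦ map_mul _ _ _

theorem bcW_cons_cons (x y : k) :
    bcW (K := K) ![x, y] = ![algebraMap k K x, algebraMap k K y] :=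
  funext <| Fin.forall_fin_two.2 ⟨rfl, rfl⟩

theorem bcW_pf1 (a : k) : bcW (K := K) (pf1 a) = pf1 (algebraMap k K a) := by
  rw [pf1, bcW_cons_cons, map_one, map_neg, pf1]

theorem bcW_hypW (m : ℕ) : bcW (hypW k m) = hypW K m := by
  ext (i | i) <;> simp [bcW, hypW]

theorem bcW_ne_zero {w : ι → k} (hw : ∀ i, w i ≠ 0) : ∀ i, bcW (K := K) w i ≠ 0 :=
  fun i ↦ (map_ne_zero _).2 (hw i)

end BaseChange

variable [Fintype ι] [Fintype κ]

theorem diagBilin_apply (w x y : ι → K) : diagBilin w x y = ∑ i, w i * (x i * y i) := by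
  simp [diagBilin, LinearMap.sum_apply]

theorem diagBilin_self (w x : ι → K) : diagBilin w x x = diagQF w x := by
  simp only [diagBilin_apply, diagQF, pow_two]

theorem isSymm_diagBilin (w : ι → K) : (diagBilin w).IsSymm :=
  ⟨fun x y ↦ by simp only [diagBilin_apply, mul_comm]⟩

theorem toMatrix'_diagBilin [DecidableEq ι] (w : ι → K) :
    LinearMap.BilinForm.toMatrix' (diagBilin w) = Matrix.diagonal w := by
  ext i j
  obtain rfl | hij := eq_or_ne i j
  · simp [diagBilin_apply, Pi.single_apply]
  · simp [diagBilin_apply, Pi.single_apply, hij, hij.symm]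

theorem nondegenerate_diagBilin_iff {w : ι → K} :
    (diagBilin w).Nondegenerate ↔ ∀ i, w i ≠ 0 := by
  classical
  rw [← LinearMap.BilinForm.nondegenerate_toMatrix'_iff, toMatrix'_diagBilin,
    Matrix.nondegenerate_iff_det_ne_zero, Matrix.det_diagonal, Finset.prod_ne_zero_iff]
  simp only [Finset.mem_univ, forall_const]

theorem diagBilin_orthW (w : ι → K) (w' : κ → K) :
    diagBilin (orthW w w') = (bilinProd (diagBilin w) (diagBilin w')).comp
      (LinearEquiv.sumArrowLequivProdArrow ι κ K K).toLinearMap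
      (LinearEquiv.sumArrowLequivProdArrow ι κ K K).toLinearMap := by
  refine LinearMap.ext₂ fun x y ↦ ?_
  simp [diagBilin_apply, bilinProd_apply, orthW]

theorem qfEquiv_iff_comp_eq [NeZero (2 : K)] {w : ι → K} {w' : κ → K} :
    QFEquiv K w w' ↔ ∃ e : (ι → K) ≃ₗ[K] (κ → K),
      (diagBilin w').comp e.toLinearMap e.toLinearMap = diagBilin w := by
  refine exists_congr fun e ↦ ⟨fun he ↦ ?_, fun he v ↦ ?_⟩
  · refine LinearMap.BilinForm.ext_of_isSymm ⟨fun x y ↦ (isSymm_diagBilin w').eq _ _⟩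
      (isSymm_diagBilin w) fun x ↦ ?_
    rw [LinearMap.BilinForm.comp_apply, diagBilin_self, diagBilin_self]
    exact he x
  · rw [← diagBilin_self, ← diagBilin_self, ← he]
    rfl

theorem toMatrix'_diagBilin_comp [DecidableEq ι] [DecidableEq κ] (w' : κ → K)
    (f : (ι → K) →ₗ[K] (κ → K)) :
    LinearMap.BilinForm.toMatrix' ((diagBilin w').comp f f) =
      (LinearMap.toMatrix' f)ᵀ * Matrix.diagonal w' * LinearMap.toMatrix' f := by
  rw [LinearMap.BilinForm.toMatrix'_comp, toMatrix'_diagBilin]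

theorem qfEquiv_iff_exists_matrix [DecidableEq ι] [DecidableEq κ] [NeZero (2 : K)] {w : ι → K}
    {w' : κ → K} :
    QFEquiv K w w' ↔ ∃ (A : Matrix κ ι K) (B : Matrix ι κ K),
      B * A = 1 ∧ A * B = 1 ∧ Aᵀ * Matrix.diagonal w' * A = Matrix.diagonal w := by
  rw [qfEquiv_iff_comp_eq]
  constructor
  · rintro ⟨e, he⟩
    refine ⟨LinearMap.toMatrix' e.toLinearMap, LinearMap.toMatrix' e.symm.toLinearMap, ?_, ?_, ?_⟩
    · simp [← LinearMap.toMatrix'_comp]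
    · simp [← LinearMap.toMatrix'_comp]
    · rw [← toMatrix'_diagBilin_comp, he, toMatrix'_diagBilin]
  · rintro ⟨A, B, hBA, hAB, hA⟩
    refine ⟨Matrix.toLin'OfInv hBA hAB, LinearMap.BilinForm.toMatrix'.injective ?_⟩
    rw [toMatrix'_diagBilin_comp, toMatrix'_diagBilin, ← hA]
    exact congrArg (fun M ↦ Mᵀ * Matrix.diagonal w' * M) (LinearMap.toMatrix'_toLin' A)

section BaseChange

theorem neZero_two_of_algebra (k K : Type*) [Field k] [Field K] [Algebra k K] [NeZero (2 : k)] :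
    NeZero (2 : K) :=
  ⟨map_ofNat (algebraMap k K) 2 ▸ (map_ne_zero _).2 two_ne_zero⟩

variable {k : Type} [Field k] [Algebra k K]

theorem QFEquiv.baseChange [NeZero (2 : k)] {w : ι → k} {w' : κ → k} (h : QFEquiv k w w') :
    QFEquiv K (bcW w) (bcW w') := by
  classical
  have := neZero_two_of_algebra k K
  obtain ⟨A, B, hBA, hAB, hA⟩ := qfEquiv_iff_exists_matrix.1 h
  let φ := algebraMap k K
  refine qfEquiv_iff_exists_matrix.2 ⟨A.map φ, B.map φ, ?_, ?_, ?_⟩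
  · rw [← Matrix.map_mul, hBA, Matrix.map_one _ (map_zero φ) (map_one φ)]
  · rw [← Matrix.map_mul, hAB, Matrix.map_one _ (map_zero φ) (map_one φ)]
  · have hA_map := congrArg (Matrix.map · φ) hA
    simp only [Matrix.map_mul, Matrix.transpose_map, Matrix.diagonal_map (map_zero φ)] at hA_map
    exact hA_map

theorem WittEquiv.baseChange [NeZero (2 : k)] {w : ι → k} {w' : κ → k} (h : WittEquiv k w w') :
    WittEquiv K (bcW w) (bcW w') := by
  obtain ⟨m, m', h⟩ := h
  exact ⟨m, m', by simpa only [bcW_orthW, bcW_hypW] using h.baseChange (K := K)⟩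

end BaseChange

theorem QFEquiv.ne_zero [NeZero (2 : K)] {w : ι → K} {w' : κ → K} (h : QFEquiv K w w')
    (hw' : ∀ j, w' j ≠ 0) : ∀ i, w i ≠ 0 := by
  obtain ⟨e, he⟩ := qfEquiv_iff_comp_eq.1 h
  rw [← nondegenerate_diagBilin_iff, ← he]
  exact (nondegenerate_diagBilin_iff.2 hw').congr e.symm

theorem WittEquiv.ne_zero [NeZero (2 : K)] {w : ι → K} {w' : κ → K} (h : WittEquiv K w w')
    (hw' : ∀ j, w' j ≠ 0) : ∀ i, w i ≠ 0 := by
  obtain ⟨m, m', h⟩ := h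
  exact fun i ↦ h.ne_zero (orthW_ne_zero hw' (hypW_ne_zero m')) (.inl i)

theorem isMetabolic_hypW (m : ℕ) : IsMetabolic (diagBilin (hypW K m)) := by
  refine .of_injective (LinearMap.funLeft K K (Sum.elim id id))
    (LinearMap.funLeft_injective_of_surjective _ _ _ fun i ↦ ⟨.inl i, rfl⟩) (fun x y ↦ ?_) ?_
  · simp [diagBilin_apply, hypW, LinearMap.funLeft_apply]
  · simp [two_mul]

theorem isMetabolic_tensorW_pf1_sq (s : K) (r : ι → K) :
    IsMetabolic (diagBilin (tensorW (pf1 (s ^ 2)) r)) := by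
  refine .of_injective (LinearMap.pi fun p : Fin 2 × ι ↦
      (![s, 1] p.1 : K) • (LinearMap.proj p.2 : (ι → K) →ₗ[K] K))
    (fun x y hxy ↦ funext fun i ↦ ?_) (fun x y ↦ ?_) ?_
  · simpa using congrFun hxy (1, i)
  · simp only [diagBilin_apply, Fintype.sum_prod_type, Fin.sum_univ_two, ← Finset.sum_add_distrib]
    refine Finset.sum_eq_zero fun i _ ↦ ?_
    simp only [tensorW, pf1, LinearMap.pi_apply, LinearMap.smul_apply, LinearMap.proj_apply,
      smul_eq_mul, Matrix.cons_val_zero, Matrix.cons_val_one]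
    ring
  · simp

theorem WittEquiv.isMetabolic [NeZero (2 : K)] {w : ι → K} {w' : κ → K} (h : WittEquiv K w w')
    (hw' : ∀ j, w' j ≠ 0) (hm : IsMetabolic (diagBilin w')) : IsMetabolic (diagBilin w) := by
  have hw := h.ne_zero hw'
  obtain ⟨m, m', h⟩ := h
  obtain ⟨e, he⟩ := qfEquiv_iff_comp_eq.1 h
  have hm_orthW : IsMetabolic (diagBilin (orthW w' (hypW K m'))) := by
    rw [diagBilin_orthW]
    exact (hm.prod (isMetabolic_hypW m')).comp_equiv _
  have hm_prod : IsMetabolic (bilinProd (diagBilin w) (diagBilin (hypW K m))) := by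
    refine .of_comp_equiv (LinearEquiv.sumArrowLequivProdArrow _ _ K K) ?_
    rw [← diagBilin_orthW, ← he]
    exact hm_orthW.comp_equiv e
  exact .of_prod (nondegenerate_diagBilin_iff.2 hw) (nondegenerate_diagBilin_iff.2 (hypW_ne_zero m))
    (isMetabolic_hypW m) hm_prod

theorem IsMetabolic.exists_smul_eq {q : ι → K} {a ν : K} (hq : AnisotropicQF q) (ha : a ≠ 0)
    (h : IsMetabolic (diagBilin (tensorW ![a, -ν] q))) (u : ι → K) :
    ∃ v, a * diagQF q v = ν * diagQF q u := by
  obtain ⟨T, hT, hdim⟩ := h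
  have hvalue (v) (hv : v ∈ T) :
      a * diagQF q (fun i ↦ v (0, i)) = ν * diagQF q (fun i ↦ v (1, i)) := by
    have hv0 := hT hv v hv
    simp only [diagBilin_self, diagQF, Fintype.sum_prod_type, Fin.sum_univ_two, tensorW,
      Matrix.cons_val_zero, Matrix.cons_val_one, mul_assoc, neg_mul, Finset.sum_neg_distrib,
      ← sub_eq_add_neg] at hv0
    rw [diagQF, diagQF, Finset.mul_sum, Finset.mul_sum]
    exact eq_of_sub_eq_zero hv0
  let π : T →ₗ[K] (ι → K) := LinearMap.funLeft K K (Prod.mk 1) ∘ₗ T.subtype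
  have hπ_inj : Function.Injective π := by
    refine (injective_iff_map_eq_zero π).2 fun ⟨v, hv⟩ hv1 ↦ Subtype.ext ?_
    have hv1 : (fun i ↦ v (1, i)) = 0 := hv1
    have hv0 : (fun i ↦ v (0, i)) = 0 := by
      have hzero : a * diagQF q (fun i ↦ v (0, i)) = 0 := by rw [hvalue v hv, hv1]; simp [diagQF]
      exact hq _ ((mul_eq_zero.1 hzero).resolve_left ha)
    funext ⟨j, i⟩
    fin_cases j
    exacts [congrFun hv0 i, congrFun hv1 i]
  have hπ_surj : Function.Surjective π := by
    have hle := LinearMap.finrank_le_finrank_of_injective hπ_inj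
    simp only [Module.finrank_fintype_fun_eq_card, Fintype.card_prod, Fintype.card_fin] at hdim hle
    refine (LinearMap.injective_iff_surjective_of_finrank_eq_finrank ?_).1 hπ_inj
    rw [Module.finrank_fintype_fun_eq_card]
    lia
  obtain ⟨⟨v, hv⟩, rfl⟩ := hπ_surj u
  exact ⟨_, hvalue v hv⟩

theorem diagQF_pf1 (d : K) (v : Fin 2 → K) : diagQF (pf1 d) v = v 0 ^ 2 - d * v 1 ^ 2 := by
  simp [diagQF, pf1, sub_eq_add_neg]

theorem representsQF_pf1_sq [NeZero (2 : K)] {t : K} (ht : t ≠ 0) (x : K) :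
    RepresentsQF (pf1 (t ^ 2)) x := by
  refine ⟨![(x + 1) / 2, (x - 1) / (2 * t)], ?_⟩
  simp only [diagQF_pf1, Matrix.cons_val_zero, Matrix.cons_val_one]
  field

theorem representsQF_pf1_of_not_anisotropicQF [NeZero (2 : K)] {d : K} (hd : d ≠ 0)
    (h : ¬AnisotropicQF (pf1 d)) (x : K) : RepresentsQF (pf1 d) x := by
  simp only [AnisotropicQF, not_forall] at h
  obtain ⟨v, hv, hv_ne⟩ := h
  rw [diagQF_pf1, sub_eq_zero] at hv
  have hv1 : v 1 ≠ 0 := fun hv1 ↦ hv_ne <| funext <| Fin.forall_fin_two.2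
    ⟨by simpa [hv1] using hv, hv1⟩
  have hd_sq : d = (v 0 / v 1) ^ 2 := by field_simp; exact hv.symm
  rw [hd_sq] at hd ⊢
  exact representsQF_pf1_sq (pow_ne_zero_iff two_ne_zero |>.1 hd) x

theorem representsQF_pf1_div_of_isMetabolic [NeZero (2 : K)] {a ν d : K} (ha : a ≠ 0) (hd : d ≠ 0)
    (h : IsMetabolic (diagBilin (tensorW ![a, -ν] (pf1 d)))) : RepresentsQF (pf1 d) (ν / a) := by
  by_cases hq : AnisotropicQF (pf1 d)
  · obtain ⟨v, hv⟩ := h.exists_smul_eq hq ha ![1, 0]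
    have hone : diagQF (pf1 d) ![1, 0] = 1 := by simp [diagQF_pf1]
    exact ⟨v, by rw [eq_div_iff ha, mul_comm, hv, hone, mul_one]⟩
  · exact representsQF_pf1_of_not_anisotropicQF hd hq _

theorem RepresentsQF.inv {w : ι → K} {x : K} (h : RepresentsQF w x) : RepresentsQF w x⁻¹ := by
  obtain ⟨v, rfl⟩ := h
  refine ⟨(diagQF w v)⁻¹ • v, ?_⟩
  have hsmul (t : K) : diagQF w (t • v) = t ^ 2 * diagQF w v := by
    simp only [diagQF, Pi.smul_apply, smul_eq_mul, mul_pow, Finset.mul_sum, mul_left_comm]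
  rw [hsmul]
  simpa only [pow_two, inv_inv] using mul_self_mul_inv (diagQF w v)⁻¹

end DiagonalForms

theorem representsQF_pf1_div_of_wittEquiv {k K : Type} [Field k] [Field K] [Algebra k K]
    [NeZero (2 : k)] {ι : Type} [Fintype ι] {a b d ν : k} {r : ι → k} {s : K} (ha : a ≠ 0)
    (hb : b ≠ 0) (hr : ∀ i, r i ≠ 0) (hs : s ^ 2 = algebraMap k K b)
    (h : WittEquiv k (tensorW ![a, -ν] (pf1 d)) (tensorW (pf1 b) r)) :
    RepresentsQF (pf1 (algebraMap k K d)) (algebraMap k K (ν / a)) := by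
  have := neZero_two_of_algebra k K
  have hbr := tensorW_ne_zero (pf1_ne_zero hb) hr
  have hd : d ≠ 0 := by
    simpa [tensorW, pf1, ha] using h.ne_zero hbr (0, 1)
  have hmetabolic : IsMetabolic (diagBilin (bcW (K := K) (tensorW ![a, -ν] (pf1 d)))) := by
    refine h.baseChange.isMetabolic (bcW_ne_zero hbr) ?_
    rw [bcW_tensorW, bcW_pf1, ← hs]
    exact isMetabolic_tensorW_pf1_sq s _
  rw [bcW_tensorW, bcW_pf1, bcW_cons_cons, map_neg] at hmetabolic
  rw [map_div₀]
  exact representsQF_pf1_div_of_isMetabolic ((map_ne_zero _).2 ha) ((map_ne_zero _).2 hd) hmetabolic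

theorem stmt_10_general {k K : Type} [Field k] [Field K] [Algebra k K] (hchar : (2 : k) ≠ 0)
    {b c d₁ d₂ ν : k} (hb : b ≠ 0) (hc : c ≠ 0) (hν : ν ≠ 0) {s : K}
    (hs : s ^ 2 = algebraMap k K b)
    (h₁ : ∃ (m : ℕ) (r : Fin m → k), (∀ i, r i ≠ 0) ∧
      WittEquiv k (pf2 ν d₁) (tensorW (pf1 b) r))
    (h₂ : ∃ (m : ℕ) (r : Fin m → k), (∀ i, r i ≠ 0) ∧
      WittEquiv k (tensorW ![c, -ν] (pf1 d₂)) (tensorW (pf1 b) r)) :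
    ∃ α β : k, α ≠ 0 ∧ β ≠ 0 ∧ c = α * β ∧
      RepresentsQF (pf1 (algebraMap k K d₁)) (algebraMap k K α) ∧
      RepresentsQF (pf1 (algebraMap k K d₂)) (algebraMap k K β) := by
  have : NeZero (2 : k) := ⟨hchar⟩
  obtain ⟨m₁, r₁, hr₁, hw₁⟩ := h₁
  obtain ⟨m₂, r₂, hr₂, hw₂⟩ := h₂
  have hν_repr := representsQF_pf1_div_of_wittEquiv one_ne_zero hb hr₁ hs hw₁
  have hc_repr := (representsQF_pf1_div_of_wittEquiv hc hb hr₂ hs hw₂).inv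
  rw [div_one] at hν_repr
  rw [← map_inv₀, inv_div] at hc_repr
  exact ⟨ν, c / ν, hν, div_ne_zero hc hν, (mul_div_cancel₀ c hν).symm, hν_repr, hc_repr⟩
/-- if `⟨⟨ν,b+1⟩⟩ ∈ ⟨⟨b⟩⟩·W(k₀)` and `⟨c,−ν⟩⊗⟨⟨b+c²⟩⟩ ∈ ⟨⟨b⟩⟩·W(k₀)` for
some `ν ∈ k₀ˣ`, then `c ∈ (k₀ˣ ∩ D_{k₀(√b)}(⟨⟨b+1⟩⟩)) · (k₀ˣ ∩ D_{k₀(√b)}(⟨⟨b+c²⟩⟩))`.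
Here `K = k₀(√b)`. -/
theorem stmt_10 {k₀ K : Type} [Field k₀] [Field K] [Algebra k₀ K]
    (hchar : (2 : k₀) ≠ 0) (b c : k₀) (hb : b ≠ 0) (hc : c ≠ 0)
    (hbns : ¬∃ x : k₀, x ^ 2 = b)
    (s : K) (hs : s ^ 2 = algebraMap k₀ K b)
    (hgen : Algebra.adjoin k₀ {s} = ⊤)
    (ν : k₀) (hν : ν ≠ 0)
    (h1 : ∃ (m : ℕ) (r : Fin m → k₀), (∀ i, r i ≠ 0) ∧
      WittEquiv k₀ (pf2 ν (b + 1)) (tensorW (pf1 b) r))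
    (h2 : ∃ (m : ℕ) (r : Fin m → k₀), (∀ i, r i ≠ 0) ∧
      WittEquiv k₀ (tensorW ![c, -ν] (pf1 (b + c ^ 2))) (tensorW (pf1 b) r)) :
    ∃ α β : k₀, α ≠ 0 ∧ β ≠ 0 ∧ c = α * β ∧
      RepresentsQF (pf1 (algebraMap k₀ K (b + 1))) (algebraMap k₀ K α) ∧
      RepresentsQF (pf1 (algebraMap k₀ K (b + c ^ 2))) (algebraMap k₀ K β) := by
  exact stmt_10_general hchar hb hc hν hs h1 h2
end

section
/- Let k be a field of characteristic ≠ 2, let q₁, q₂ be anisotropic quadratic forms over k, and let K be an odd-degree field extension of F = k((t)) with residue field k̄ (an odd-degree extension of k). If q₁ and q₂ are not similar over k, then for every μ ∈ Kˣ with odd valuation, the form (q₁)_K ⊥ t·(q₂)_K is not isometric to ⟨μ⟩·((q₁)_K ⊥ t·(q₂)_K). Equivalently, every similarity factor of (q₁ ⊥ ⟨t⟩q₂)_K has even valuation. -/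
open scoped BigOperators

/-!
Let `F = k((t))` and `Q = q₁ ⊥ ⟨t⟩q₂`. Scharlau transfer along `K / F(μ) / F`, with functionals
that send `⟨1⟩` to `⟨1⟩` and `⟨μ⟩` to `⟨N μ⟩` up to Witt equivalence, shows that if `μ` is a
similarity factor of `Q_K`, then the norm `N μ` of `μ` from `F(μ)` is a similarity factor of `Q`.
By uniqueness of the extension of the `t`-adic absolute value, `e · ord (N μ) = v μ · [F(μ) : F]`,
so `N μ` has odd order. A similitude of `Q` with factor of odd order exchanges the two residue
forms of `Q` up to a scalar, making `q₁` and `q₂` similar over `k`.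
-/

section WittRelated

open Module (finrank)
open LinearMap (BilinForm)

variable {k U V W : Type*} [Field k] [AddCommGroup U] [Module k U]
  [AddCommGroup V] [Module k V] [AddCommGroup W] [Module k W]

lemma finrank_add_finrank_le_of_orthogonal [FiniteDimensional k V] {B : BilinForm k V}
    (hB : B.SeparatingLeft) {N R : Submodule k V} (h : ∀ x ∈ N, ∀ y ∈ R, B x y = 0) :
    finrank k N + finrank k R ≤ finrank k V := by
  have hR : R ≤ B.orthogonal N := fun y hy x hx ↦ h x hx y hy
  have := LinearMap.BilinForm.finrank_add_finrank_orthogonal' (B := B) N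
  rw [LinearMap.separatingLeft_iff_ker_eq_bot.1 hB, inf_bot_eq, finrank_bot] at this
  have := Submodule.finrank_mono hR
  lia

lemma finrank_le_finrank_range_add [FiniteDimensional k V] {B : BilinForm k V}
    (hB : B.SeparatingLeft) {M : Type*} [AddCommGroup M] [Module k M] [FiniteDimensional k M]
    {f : M →ₗ[k] V} {g : LinearMap.ker f →ₗ[k] U} {h : LinearMap.ker g →ₗ[k] V}
    (hh : Function.Injective h)
    (horth : ∀ x ∈ LinearMap.range h, ∀ y ∈ LinearMap.range f, B x y = 0) :
    finrank k M ≤ finrank k (LinearMap.range g) + finrank k V := by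
  have := finrank_add_finrank_le_of_orthogonal hB horth
  have := LinearMap.finrank_range_add_finrank_ker f
  have := LinearMap.finrank_range_add_finrank_ker g
  rw [LinearMap.finrank_range_of_inj hh] at *
  lia

/-- Witt equivalence of nondegenerate bilinear forms, encoded by a Lagrangian: a subspace of
`V × W` of at least half the dimension on which `B ⊥ -C` vanishes. -/
def WittRelated (B : BilinForm k V) (C : BilinForm k W) : Prop :=
  ∃ Γ : Submodule k (V × W), finrank k V + finrank k W ≤ 2 * finrank k Γ ∧
    ∀ p ∈ Γ, ∀ q ∈ Γ, B p.1 q.1 = C p.2 q.2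

namespace WittRelated

variable {A : BilinForm k U} {B : BilinForm k V} {C : BilinForm k W}

lemma of_injective {f : U →ₗ[k] V × W} (hf : Function.Injective f)
    (hdim : finrank k V + finrank k W ≤ 2 * finrank k U)
    (h : ∀ x y, B (f x).1 (f y).1 = C (f x).2 (f y).2) : WittRelated B C := by
  refine ⟨LinearMap.range f, by rwa [LinearMap.finrank_range_of_inj hf], ?_⟩
  rintro _ ⟨x, rfl⟩ _ ⟨y, rfl⟩
  exact h x y

lemma of_linearIndependent {ι : Type*} [Fintype ι] {x : ι → V × W} (hx : LinearIndependent k x)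
    (hdim : finrank k V + finrank k W ≤ 2 * Fintype.card ι)
    (h : ∀ i j, B (x i).1 (x j).1 = C (x i).2 (x j).2) : WittRelated B C := by
  refine ⟨Submodule.span k (Set.range x), by rwa [finrank_span_eq_card hx], fun p hp q hq ↦ ?_⟩
  induction hp, hq using Submodule.span_induction₂ with
  | mem_mem p q hp hq =>
    obtain ⟨i, rfl⟩ := hp
    obtain ⟨j, rfl⟩ := hq
    exact h i j
  | zero_left _ _ => simp
  | zero_right _ _ => simp
  | add_left p p' q _ _ _ hp hp' => simp [hp, hp']
  | add_right p q q' _ _ _ hq hq' => simp [hq, hq']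
  | smul_left c p q _ _ h => simp [h]
  | smul_right c p q _ _ h => simp [h]

lemma of_linearEquiv (e : V ≃ₗ[k] W) (h : ∀ x y, C (e x) (e y) = B x y) : WittRelated B C :=
  of_injective (f := LinearMap.id.prod e.toLinearMap) (fun _ _ hxy ↦ congrArg Prod.fst hxy)
    (by rw [← e.finrank_eq, two_mul]) fun x y ↦ (h x y).symm

lemma symm (h : WittRelated B C) : WittRelated C B := by
  obtain ⟨Γ, hdim, hΓ⟩ := h
  exact of_injective (f := (LinearEquiv.prodComm k V W).toLinearMap ∘ₗ Γ.subtype)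
    ((LinearEquiv.prodComm k V W).injective.comp Γ.injective_subtype)
    (by rwa [add_comm]) fun p q ↦ (hΓ p p.2 q q.2).symm

lemma smul (c : k) (h : WittRelated B C) : WittRelated (c • B) (c • C) := by
  obtain ⟨Γ, hdim, hΓ⟩ := h
  exact ⟨Γ, hdim, fun p hp q hq ↦ congrArg (c • ·) (hΓ p hp q hq)⟩

/-- Composition of relations; the pairs `(0, v)`, `(v, 0)` lost in the composite are orthogonal to
the differences of middle components, which bounds their number. -/
lemma trans [FiniteDimensional k U] [FiniteDimensional k V] [FiniteDimensional k W]
    (hB : B.SeparatingLeft) (hAB : WittRelated A B) (hBC : WittRelated B C) :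
    WittRelated A C := by
  obtain ⟨Γ, hΓdim, hΓ⟩ := hAB
  obtain ⟨Δ, hΔdim, hΔ⟩ := hBC
  let mismatch : Γ × Δ →ₗ[k] V :=
    (LinearMap.snd k U V ∘ₗ Γ.subtype).coprod (-(LinearMap.fst k V W ∘ₗ Δ.subtype))
  let ends : LinearMap.ker mismatch →ₗ[k] U × W :=
    ((LinearMap.fst k U V ∘ₗ Γ.subtype).prodMap (LinearMap.snd k V W ∘ₗ Δ.subtype)) ∘ₗ
      (LinearMap.ker mismatch).subtype
  let middle : LinearMap.ker ends →ₗ[k] V :=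
    LinearMap.fst k V W ∘ₗ Δ.subtype ∘ₗ LinearMap.snd k Γ Δ ∘ₗ
      (LinearMap.ker mismatch).subtype ∘ₗ (LinearMap.ker ends).subtype
  have matching (z : LinearMap.ker mismatch) : z.1.1.1.2 = z.1.2.1.1 :=
    add_neg_eq_zero.1 z.2
  have ends_zero (z : LinearMap.ker ends) : z.1.1.1.1.1 = 0 ∧ z.1.1.2.1.2 = 0 :=
    Prod.ext_iff.1 z.2
  have hmiddle : Function.Injective middle := by
    intro z z' (h : z.1.1.2.1.1 = z'.1.1.2.1.1)
    exact Subtype.ext (Subtype.ext (Prod.ext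
      (Subtype.ext (Prod.ext ((ends_zero z).1.trans (ends_zero z').1.symm)
        ((matching z.1).trans (h.trans (matching z'.1).symm))))
      (Subtype.ext (Prod.ext h ((ends_zero z).2.trans (ends_zero z').2.symm)))))
  have horth : ∀ x ∈ LinearMap.range middle, ∀ y ∈ LinearMap.range mismatch, B x y = 0 := by
    rintro _ ⟨z, rfl⟩ _ ⟨⟨p, q⟩, rfl⟩
    have hp : B (middle z) p.1.2 = 0 := by
      change B z.1.1.2.1.1 p.1.2 = 0
      rw [← matching z.1, ← hΓ _ z.1.1.1.2 _ p.2, (ends_zero z).1, map_zero, LinearMap.zero_apply]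
    have hq : B (middle z) q.1.1 = 0 :=
      (hΔ _ z.1.1.2.2 _ q.2).trans (by rw [(ends_zero z).2, map_zero, LinearMap.zero_apply])
    change B (middle z) (p.1.2 + -q.1.1) = 0
    rw [map_add, map_neg, hp, hq, neg_zero, add_zero]
  refine ⟨LinearMap.range ends, ?_, ?_⟩
  · have := finrank_le_finrank_range_add hB hmiddle horth
    rw [Module.finrank_prod] at this
    lia
  · rintro _ ⟨p, rfl⟩ _ ⟨q, rfl⟩
    calc A p.1.1.1.1 q.1.1.1.1 = B p.1.1.1.2 q.1.1.1.2 := hΓ _ p.1.1.2 _ q.1.1.2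
      _ = B p.1.2.1.1 q.1.2.1.1 := by rw [matching p, matching q]
      _ = C p.1.2.1.2 q.1.2.1.2 := hΔ _ p.1.2.2 _ q.1.2.2

lemma exists_linearEquiv [FiniteDimensional k V] [FiniteDimensional k W]
    (hB : ∀ x, B x x = 0 → x = 0) (hC : ∀ y, C y y = 0 → y = 0) (h : WittRelated B C) :
    ∃ e : V ≃ₗ[k] W, ∀ x y, C (e x) (e y) = B x y := by
  obtain ⟨Γ, hdim, hΓ⟩ := h
  have hfst : Function.Injective (LinearMap.fst k V W ∘ₗ Γ.subtype) := by
    rw [← LinearMap.ker_eq_bot, LinearMap.ker_eq_bot']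
    rintro ⟨⟨x, y⟩, hxy⟩ rfl
    exact Subtype.ext (Prod.ext rfl (hC y ((hΓ _ hxy _ hxy).symm.trans (by simp))))
  have hsnd : Function.Injective (LinearMap.snd k V W ∘ₗ Γ.subtype) := by
    rw [← LinearMap.ker_eq_bot, LinearMap.ker_eq_bot']
    rintro ⟨⟨x, y⟩, hxy⟩ rfl
    exact Subtype.ext (Prod.ext (hB x ((hΓ _ hxy _ hxy).trans (by simp))) rfl)
  have hV := LinearMap.finrank_le_finrank_of_injective hfst
  have hW := LinearMap.finrank_le_finrank_of_injective hsnd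
  let e₁ := LinearEquiv.ofInjectiveOfFinrankEq _ hfst (by lia)
  let e₂ := LinearEquiv.ofInjectiveOfFinrankEq _ hsnd (by lia)
  refine ⟨e₁.symm.trans e₂, fun x y ↦ ?_⟩
  obtain ⟨p, rfl⟩ := e₁.surjective x
  obtain ⟨q, rfl⟩ := e₁.surjective y
  simp only [LinearEquiv.trans_apply, LinearEquiv.symm_apply_apply]
  exact (hΓ p p.2 q q.2).symm

end WittRelated

end WittRelated

section Transfer

open LinearMap (BilinForm)

section unaryForm

variable {k : Type*} [Field k]

/-- The one-dimensional form `⟨c⟩`. -/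
def unaryForm (c : k) : BilinForm k k := c • LinearMap.mul k k

@[simp]
lemma unaryForm_apply (c x y : k) : unaryForm c x y = c * (x * y) := rfl

lemma smul_unaryForm (c a : k) : c • unaryForm a = unaryForm (c * a) := smul_smul _ _ _

end unaryForm

section diagForm

variable {k : Type*} [Field k] {ι V W : Type*} [Fintype ι] [AddCommGroup V] [Module k V]
  [AddCommGroup W] [Module k W]

/-- The tensor product of the diagonal form with weights `w` and the form `B`, on `ι → V`. -/
def diagForm (w : ι → k) (B : BilinForm k V) : BilinForm k (ι → V) :=
  ∑ i, w i • B.compl₁₂ (LinearMap.proj i) (LinearMap.proj i)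

@[simp]
lemma diagForm_apply (w : ι → k) (B : BilinForm k V) (x y : ι → V) :
    diagForm w B x y = ∑ i, w i * B (x i) (y i) := by
  simp [diagForm, LinearMap.sum_apply]

lemma diagForm_separatingLeft {w : ι → k} (hw : ∀ i, w i ≠ 0) {B : BilinForm k V}
    (hB : B.SeparatingLeft) : (diagForm w B).SeparatingLeft := by
  classical
  refine fun x hx ↦ funext fun i ↦ hB _ fun y ↦ ?_
  have hxy := hx (Pi.single i y)
  rw [diagForm_apply, Finset.sum_eq_single i
    (fun j _ hj ↦ by rw [Pi.single_eq_of_ne hj, map_zero, mul_zero])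
    (fun h ↦ absurd (Finset.mem_univ i) h), Pi.single_eq_same] at hxy
  exact (mul_eq_zero.1 hxy).resolve_left (hw i)

lemma WittRelated.diagForm [FiniteDimensional k V] [FiniteDimensional k W] (w : ι → k)
    {B : BilinForm k V} {C : BilinForm k W} (h : WittRelated B C) :
    WittRelated (diagForm w B) (diagForm w C) := by
  obtain ⟨Γ, hdim, hΓ⟩ := h
  let f : (ι → Γ) →ₗ[k] (ι → V) × (ι → W) :=
    (LinearMap.fst k V W ∘ₗ Γ.subtype).compLeft ι |>.prod
      ((LinearMap.snd k V W ∘ₗ Γ.subtype).compLeft ι)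
  have hf : Function.Injective f := fun x y hxy ↦ funext fun i ↦ Subtype.ext <|
    Prod.ext (congrFun (congrArg Prod.fst hxy) i) (congrFun (congrArg Prod.snd hxy) i)
  refine of_injective hf ?_ fun x y ↦ ?_
  · simp only [Module.finrank_pi_fintype, Finset.sum_const, smul_eq_mul]
    nlinarith
  · simp only [diagForm_apply]
    exact Finset.sum_congr rfl fun i _ ↦ congrArg (w i * ·) (hΓ _ (x i).2 _ (y i).2)

end diagForm

variable {k L V W : Type*} [Field k] [Field L] [Algebra k L]
  [AddCommGroup V] [Module k V] [Module L V] [IsScalarTower k L V]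
  [AddCommGroup W] [Module k W] [Module L W] [IsScalarTower k L W]

/-- Scharlau's transfer `s ∘ B` of an `L`-bilinear form along a `k`-linear functional on `L`. -/
def scharlauTransfer (s : L →ₗ[k] k) (B : BilinForm L V) : BilinForm k V :=
  (B.restrictScalars₁₂ k k).compr₂ s

@[simp]
lemma scharlauTransfer_apply (s : L →ₗ[k] k) (B : BilinForm L V) (x y : V) :
    scharlauTransfer s B x y = s (B x y) := rfl

lemma WittRelated.scharlauTransfer (s : L →ₗ[k] k) {B : BilinForm L V} {C : BilinForm L W}
    (h : WittRelated B C) : WittRelated (scharlauTransfer s B) (scharlauTransfer s C) := by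
  obtain ⟨Γ, hdim, hΓ⟩ := h
  refine of_injective (f := (Γ.subtype).restrictScalars k) Γ.injective_subtype ?_
    fun p q ↦ congrArg s (hΓ p p.2 q q.2)
  rw [← Module.finrank_mul_finrank k L V, ← Module.finrank_mul_finrank k L W,
    ← Module.finrank_mul_finrank k L Γ]
  nlinarith

lemma scharlauTransfer_unaryForm_separatingLeft {s : L →ₗ[k] k} (hs : s ≠ 0) {c : L} (hc : c ≠ 0) :
    (scharlauTransfer s (unaryForm c)).SeparatingLeft := by
  intro x hx
  by_contra hx0
  refine hs (LinearMap.ext fun y ↦ ?_)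
  have := hx ((c * x)⁻¹ * y)
  rwa [scharlauTransfer_apply, unaryForm_apply, ← mul_assoc, ← mul_assoc,
    mul_inv_cancel₀ (mul_ne_zero hc hx0), one_mul] at this

end Transfer

section OddDegree

open Module (finrank)

section PowerBasis

variable {k L : Type*} [Field k] [Field L] [Algebra k L]

lemma coord_zero_gen_pow (pb : PowerBasis k L) (h0 : 0 < pb.dim) {n : ℕ} (hn : n < pb.dim) :
    pb.basis.coord ⟨0, h0⟩ (pb.gen ^ n) = if n = 0 then 1 else 0 := by
  have := pb.basis.repr_self ⟨n, hn⟩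
  rw [pb.basis_eq_pow] at this
  simp [this, Finsupp.single_apply]

lemma coord_zero_gen_pow_dim (pb : PowerBasis k L) (h0 : 0 < pb.dim) :
    pb.basis.coord ⟨0, h0⟩ (pb.gen ^ pb.dim) = -(minpoly k pb.gen).coeff 0 := by
  have hpow : pb.gen ^ pb.dim =
      -∑ i ∈ Finset.range pb.dim, (minpoly k pb.gen).coeff i • pb.gen ^ i := by
    have hroot := minpoly.aeval k pb.gen
    rw [Polynomial.aeval_eq_sum_range, pb.natDegree_minpoly, Finset.sum_range_succ,
      ← pb.natDegree_minpoly, (minpoly.monic pb.isIntegral_gen).coeff_natDegree, one_smul,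
      pb.natDegree_minpoly] at hroot
    exact eq_neg_of_add_eq_zero_right hroot
  rw [hpow, map_neg, map_sum, Finset.sum_eq_single_of_mem 0 (Finset.mem_range.2 h0)]
  · rw [map_smul, coord_zero_gen_pow pb h0 h0, if_pos rfl, smul_eq_mul, mul_one]
  · intro i hi hi0
    rw [map_smul, coord_zero_gen_pow pb h0 (Finset.mem_range.1 hi), if_neg hi0, smul_zero]

lemma wittRelated_scharlauTransfer_of_gen_pow (pb : PowerBasis k L) {h : ℕ}
    (hdim : pb.dim = 2 * h + 1) {s : L →ₗ[k] k} {c : L} {a : k} (r : Fin (h + 1) → k)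
    (hs : ∀ i j : Fin (h + 1), s (c * pb.gen ^ (i + j : ℕ)) = a * (r i * r j)) :
    WittRelated (scharlauTransfer s (unaryForm c)) (unaryForm a) := by
  have := pb.finite
  refine .of_linearIndependent (x := fun i : Fin (h + 1) ↦ (pb.gen ^ (i : ℕ), r i)) ?_ ?_
    fun i j ↦ ?_
  · refine LinearIndependent.of_comp (LinearMap.fst k L k) ?_
    have := pb.basis.linearIndependent.comp (Fin.castLE (show h + 1 ≤ pb.dim by lia))
      (Fin.castLE_injective _)
    simpa [Function.comp_def] using this
  · rw [pb.finrank, hdim, Module.finrank_self, Fintype.card_fin]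
    lia
  · rw [scharlauTransfer_apply, unaryForm_apply, unaryForm_apply, ← pow_add, hs]

lemma exists_scharlauTransfer_of_powerBasis (pb : PowerBasis k L) (hodd : Odd (finrank k L)) :
    ∃ s : L →ₗ[k] k, s 1 = 1 ∧
      WittRelated (scharlauTransfer s (unaryForm 1)) (unaryForm (1 : k)) ∧
      WittRelated (scharlauTransfer s (unaryForm pb.gen))
        (unaryForm (-(minpoly k pb.gen).coeff 0)) := by
  obtain ⟨h, hh⟩ := hodd
  have hdim : pb.dim = 2 * h + 1 := pb.finrank.symm.trans hh
  have h0 : 0 < pb.dim := by lia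
  refine ⟨pb.basis.coord ⟨0, h0⟩, ?_, ?_, ?_⟩
  · simpa using coord_zero_gen_pow pb h0 h0
  · refine wittRelated_scharlauTransfer_of_gen_pow pb hdim
      (fun i ↦ if i = 0 then 1 else 0) fun i j ↦ ?_
    rw [one_mul, coord_zero_gen_pow pb h0 (by lia)]
    by_cases hi : i = 0 <;> simp [hi]
  · refine wittRelated_scharlauTransfer_of_gen_pow pb hdim
      (fun i ↦ if i = Fin.last h then 1 else 0) fun i j ↦ ?_
    rw [← pow_succ']
    by_cases hij : i = Fin.last h ∧ j = Fin.last h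
    · obtain ⟨rfl, rfl⟩ := hij
      have : (Fin.last h + Fin.last h + 1 : ℕ) = pb.dim := by rw [hdim, Fin.val_last]; lia
      rw [this, coord_zero_gen_pow_dim]
      simp
    · have hlt : (i + j + 1 : ℕ) < pb.dim := by
        simp only [Fin.ext_iff, Fin.val_last] at hij
        lia
      rw [coord_zero_gen_pow pb h0 hlt, if_neg (by lia)]
      rcases not_and_or.1 hij with hi | hj
      · simp [hi]
      · simp [hj]

end PowerBasis

lemma wittRelated_scharlauTransfer_comp {k E L : Type*} [Field k] [Field E] [Field L] [Algebra k E]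
    [Algebra k L] [Algebra E L] [IsScalarTower k E L] [FiniteDimensional k E]
    [FiniteDimensional E L] {t : L →ₗ[E] E} {s : E →ₗ[k] k} (hs : s ≠ 0)
    (ht : WittRelated (scharlauTransfer t (unaryForm 1)) (unaryForm (1 : E)))
    {c : E} (hc : c ≠ 0) {a : k}
    (hsc : WittRelated (scharlauTransfer s (unaryForm c)) (unaryForm a)) :
    WittRelated (scharlauTransfer (s ∘ₗ t.restrictScalars k) (unaryForm (algebraMap E L c)))
      (unaryForm a) := by
  have := Module.Finite.trans (R := k) E L
  have htc : WittRelated (scharlauTransfer t (unaryForm (algebraMap E L c))) (unaryForm c) := by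
    convert ht.smul c using 1
    · ext
      simp [Algebra.algebraMap_eq_smul_one]
    · rw [smul_unaryForm, mul_one]
  have hstc : WittRelated
      (scharlauTransfer (s ∘ₗ t.restrictScalars k) (unaryForm (algebraMap E L c)))
      (scharlauTransfer s (unaryForm c)) := htc.scharlauTransfer s
  exact hstc.trans (scharlauTransfer_unaryForm_separatingLeft hs hc) hsc

open IntermediateField in
lemma exists_scharlauTransfer_one_of_odd_finrank {E L : Type*} [Field E] [Field L] [Algebra E L]
    [FiniteDimensional E L] (hodd : Odd (finrank E L)) :
    ∃ s : L →ₗ[E] E, s 1 = 1 ∧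
      WittRelated (scharlauTransfer s (unaryForm 1)) (unaryForm (1 : E)) := by
  obtain ⟨s, hs1, hs⟩ : ∃ s : (⊤ : IntermediateField E L) →ₗ[E] E, s 1 = 1 ∧
      WittRelated (scharlauTransfer s (unaryForm 1)) (unaryForm (1 : E)) := by
    refine induction_on_adjoin
      (fun K : IntermediateField E L ↦ ∃ s : K →ₗ[E] E, s 1 = 1 ∧
        WittRelated (scharlauTransfer s (unaryForm 1)) (unaryForm (1 : E))) ?_ ?_ ⊤
    · exact ⟨(botEquiv E L).toLinearMap, map_one (botEquiv E L),
        .of_linearEquiv (botEquiv E L).toLinearEquiv fun x y ↦ by simp⟩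
    · rintro K x ⟨s, hs1, hs⟩
      have hoddx : Odd (finrank K K⟮x⟯) :=
        (Nat.odd_mul.1 (Module.finrank_mul_finrank K K⟮x⟯ L ▸
          (Nat.odd_mul.1 (Module.finrank_mul_finrank E K L ▸ hodd)).2)).1
      obtain ⟨t, ht1, ht, -⟩ :=
        exists_scharlauTransfer_of_powerBasis (adjoin.powerBasis (IsIntegral.of_finite K x)) hoddx
      have hs0 : s ≠ 0 := by rintro rfl; simp at hs1
      have := wittRelated_scharlauTransfer_comp hs0 ht one_ne_zero hs
      rw [map_one] at this
      exact ⟨s ∘ₗ t.restrictScalars E, (congrArg s ht1).trans hs1, this⟩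
  have hs0 : s ≠ 0 := by rintro rfl; simp at hs1
  refine ⟨s ∘ₗ (topEquiv (F := E) (E := L)).symm.toLinearMap, by simpa using hs1, ?_⟩
  exact (WittRelated.of_linearEquiv (topEquiv (F := E) (E := L)).symm.toLinearEquiv
    fun x y ↦ by simp).trans (scharlauTransfer_unaryForm_separatingLeft hs0 one_ne_zero) hs

open IntermediateField in
lemma exists_scharlauTransfer_of_odd_finrank {F K : Type*} [Field F] [Field K] [Algebra F K]
    [FiniteDimensional F K] (hodd : Odd (finrank F K)) {μ : K} (hμ : μ ≠ 0) :
    ∃ s : K →ₗ[F] F, s 1 = 1 ∧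
      WittRelated (scharlauTransfer s (unaryForm 1)) (unaryForm (1 : F)) ∧
      WittRelated (scharlauTransfer s (unaryForm μ)) (unaryForm (-(minpoly F μ).coeff 0)) := by
  have hodds := Nat.odd_mul.1 (Module.finrank_mul_finrank F F⟮μ⟯ K ▸ hodd)
  obtain ⟨t, ht1, ht⟩ := exists_scharlauTransfer_one_of_odd_finrank hodds.2
  obtain ⟨s, hs1, hs, hsμ⟩ := exists_scharlauTransfer_of_powerBasis
    (adjoin.powerBasis (IsIntegral.of_finite F μ)) hodds.1
  have hs0 : s ≠ 0 := by rintro rfl; simp at hs1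
  rw [adjoin.powerBasis_gen, minpoly_gen] at hsμ
  refine ⟨s ∘ₗ t.restrictScalars F, (congrArg s ht1).trans hs1, ?_, ?_⟩
  · simpa using wittRelated_scharlauTransfer_comp hs0 ht one_ne_zero hs
  · simpa using wittRelated_scharlauTransfer_comp hs0 ht
      (fun h ↦ hμ (congrArg Subtype.val h)) hsμ

end OddDegree

section NormPrinciple

variable {F K : Type} [Field F] [Field K] {ι κ : Type} [Fintype ι]

lemma diagQF_zero (w : ι → F) : diagQF w 0 = 0 := by
  simp [diagQF]

lemma diagQF_smulW (c : F) (w x : ι → F) : diagQF (smulW c w) x = c * diagQF w x := by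
  simp only [diagQF, smulW, Finset.mul_sum, mul_assoc]

lemma diagForm_smulW (c : F) (w : ι → F) (B : LinearMap.BilinForm F F) :
    diagForm (smulW c w) B = diagForm w (c • B) := by
  ext
  simp [smulW, mul_left_comm, mul_assoc]

lemma scharlauTransfer_diagForm_bcW [Algebra F K] (s : K →ₗ[F] F) (w : ι → F)
    (B : LinearMap.BilinForm K K) :
    scharlauTransfer s (diagForm (bcW w) B) = diagForm w (scharlauTransfer s B) := by
  refine LinearMap.ext₂ fun x y ↦ ?_
  simp [bcW, ← Algebra.smul_def]

lemma diagForm_unaryForm_one_self (w : ι → F) (x : ι → F) :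
    diagForm w (unaryForm 1) x x = diagQF w x := by
  simp [diagQF, sq]

lemma diagQF_add (w : ι → F) (x y : ι → F) :
    diagQF w (x + y) = diagQF w x + diagQF w y + 2 * diagForm w (unaryForm 1) x y := by
  simp only [diagQF, diagForm_apply, unaryForm_apply, Pi.add_apply, Finset.mul_sum,
    ← Finset.sum_add_distrib]
  exact Finset.sum_congr rfl fun i _ ↦ by ring

lemma QFEquiv.wittRelated [Fintype κ] (h2 : (2 : F) ≠ 0) {w : ι → F} {w' : κ → F}
    (h : QFEquiv F w w') :
    WittRelated (diagForm w (unaryForm 1)) (diagForm w' (unaryForm 1)) := by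
  obtain ⟨e, he⟩ := h
  refine .of_linearEquiv e fun x y ↦ mul_left_cancel₀ h2 ?_
  have hxy := he (x + y)
  rw [map_add, diagQF_add, diagQF_add, he, he] at hxy
  exact add_left_cancel hxy

lemma AnisotropicQF.smulW {w : ι → F} (hw : AnisotropicQF w) {c : F} (hc : c ≠ 0) :
    AnisotropicQF (smulW c w) := by
  intro x hx
  rw [diagQF_smulW] at hx
  exact hw x ((mul_eq_zero.1 hx).resolve_left hc)

lemma AnisotropicQF.ne_zero {w : ι → F} (hw : AnisotropicQF w) (i : ι) : w i ≠ 0 := by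
  classical
  intro hi
  have := congrFun (hw (Pi.single i 1) (by simp [diagQF, Pi.single_apply, hi])) i
  simp at this

/-- Scharlau's norm principle: as `[F(μ) : F]` is odd, the factor is the norm of `μ` from `F(μ)`. -/
lemma QFEquiv.smulW_neg_coeff_zero_minpoly [Algebra F K] [FiniteDimensional F K] (h2 : (2 : F) ≠ 0)
    (hodd : Odd (Module.finrank F K)) {w : ι → F} (hw : AnisotropicQF w) {μ : K} (hμ : μ ≠ 0)
    (h : QFEquiv K (smulW μ (bcW w)) (bcW w)) :
    QFEquiv F (smulW (-(minpoly F μ).coeff 0) w) w := by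
  obtain ⟨s, hs1, hs, hsμ⟩ := exists_scharlauTransfer_of_odd_finrank hodd hμ
  have hs0 : s ≠ 0 := by rintro rfl; simp at hs1
  have h2K : (2 : K) ≠ 0 := by simpa only [map_ofNat] using (map_ne_zero (algebraMap F K)).2 h2
  have hK : WittRelated (diagForm w (scharlauTransfer s (unaryForm μ)))
      (diagForm w (scharlauTransfer s (unaryForm (1 : K)))) := by
    have := (h.wittRelated h2K).scharlauTransfer s
    rwa [diagForm_smulW, smul_unaryForm, mul_one, scharlauTransfer_diagForm_bcW,
      scharlauTransfer_diagForm_bcW] at this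
  have separating {c : K} (hc : c ≠ 0) :=
    diagForm_separatingLeft hw.ne_zero (scharlauTransfer_unaryForm_separatingLeft hs0 hc)
  have hF : WittRelated (diagForm (smulW (-(minpoly F μ).coeff 0) w) (unaryForm 1))
      (diagForm w (unaryForm 1)) := by
    rw [diagForm_smulW, smul_unaryForm, mul_one]
    exact (hsμ.diagForm w).symm.trans (separating hμ)
      (hK.trans (separating one_ne_zero) (hs.diagForm w))
  have hN : -(minpoly F μ).coeff 0 ≠ 0 :=
    neg_ne_zero.2 (minpoly.coeff_zero_ne_zero (.of_finite F μ) hμ)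
  obtain ⟨e, he⟩ := hF.exists_linearEquiv
    (fun x hx ↦ hw.smulW hN x (by rwa [diagForm_unaryForm_one_self] at hx))
    (fun x hx ↦ hw x (by rwa [diagForm_unaryForm_one_self] at hx))
  exact ⟨e, fun x ↦ by simpa only [diagForm_unaryForm_one_self] using he x x⟩

end NormPrinciple

section NormOrder

open scoped NNReal WithZero

/-- The map `n ↦ b ^ (-n)`, `⊤ ↦ 0`, turning integer-valued additive valuations into
multiplicative ones. -/
noncomputable def zpowNegTop (b : ℝ) : WithTop ℤ → ℝ :=
  WithTop.recTopCoe 0 fun n ↦ b ^ (-n)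

lemma zpowNegTop_coe (b : ℝ) (n : ℤ) : zpowNegTop b n = b ^ (-n) := rfl

lemma zpowNegTop_nonneg {b : ℝ} (hb : 0 < b) (a : WithTop ℤ) : 0 ≤ zpowNegTop b a := by
  cases a with
  | top => exact le_rfl
  | coe n => exact zpow_nonneg hb.le _

lemma zpowNegTop_eq_zero_iff {b : ℝ} (hb : 0 < b) {a : WithTop ℤ} :
    zpowNegTop b a = 0 ↔ a = ⊤ := by
  cases a with
  | top => exact iff_of_true rfl rfl
  | coe n => exact iff_of_false (zpow_ne_zero _ hb.ne') (WithTop.coe_ne_top)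

lemma zpowNegTop_add {b : ℝ} (hb : 0 < b) (a c : WithTop ℤ) :
    zpowNegTop b (a + c) = zpowNegTop b a * zpowNegTop b c := by
  cases a with
  | top => exact (zero_mul _).symm
  | coe m =>
    cases c with
    | top => exact (mul_zero _).symm
    | coe n => rw [← WithTop.coe_add, zpowNegTop_coe, neg_add, zpow_add₀ hb.ne']; rfl

lemma antitone_zpowNegTop {b : ℝ} (hb : 1 ≤ b) : Antitone (zpowNegTop b) := by
  intro a c hac
  cases c with
  | top => exact zpowNegTop_nonneg (zero_lt_one.trans_le hb) a
  | coe n =>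
    cases a with
    | top => exact absurd hac (WithTop.not_top_le_coe n)
    | coe m => exact zpow_le_zpow_right₀ hb (neg_le_neg (WithTop.coe_le_coe.1 hac))

/-- The absolute value `x ↦ b ^ (-v x)` attached to an integer-valued additive valuation. -/
noncomputable def expAbsoluteValue {K : Type*} [Field K] (v : AddValuation K (WithTop ℤ))
    {b : ℝ} (hb : 1 < b) : AbsoluteValue K ℝ where
  toFun x := zpowNegTop b (v x)
  map_mul' x y := by rw [v.map_mul, zpowNegTop_add (zero_lt_one.trans hb)]
  nonneg' x := zpowNegTop_nonneg (zero_lt_one.trans hb) _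
  eq_zero' x := (zpowNegTop_eq_zero_iff (zero_lt_one.trans hb)).trans v.top_iff
  add_le' x y := calc
    zpowNegTop b (v (x + y)) ≤ zpowNegTop b (min (v x) (v y)) :=
      antitone_zpowNegTop hb.le (v.map_add x y)
    _ = max (zpowNegTop b (v x)) (zpowNegTop b (v y)) := (antitone_zpowNegTop hb.le).map_min
    _ ≤ zpowNegTop b (v x) + zpowNegTop b (v y) :=
      max_le_add_of_nonneg (zpowNegTop_nonneg (zero_lt_one.trans hb) _)
        (zpowNegTop_nonneg (zero_lt_one.trans hb) _)

lemma expAbsoluteValue_apply {K : Type*} [Field K] (v : AddValuation K (WithTop ℤ))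
    {b : ℝ} (hb : 1 < b) (x : K) : expAbsoluteValue v hb x = zpowNegTop b (v x) := rfl

variable {k : Type*} [Field k]

lemma valued_v_eq_exp_neg_order {f : LaurentSeries k} (hf : f ≠ 0) :
    (Valued.v f : ℤᵐ⁰) = WithZero.exp (-f.order) := by
  have hv : (Valued.v f : ℤᵐ⁰) ≠ 0 := (map_ne_zero _).2 hf
  refine le_antisymm ((LaurentSeries.valuation_le_iff_coeff_lt_eq_zero k).2 fun n hn ↦
    HahnSeries.coeff_eq_zero_of_lt_order hn) (not_lt.1 fun hlt ↦ hf ?_)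
  have hle : Valued.v f ≤ WithZero.exp (-(f.order + 1)) := by
    rw [← WithZero.log_le_iff_le_exp hv]
    have := (WithZero.log_lt_iff_lt_exp hv).2 hlt
    lia
  exact HahnSeries.coeff_order_eq_zero.1
    ((LaurentSeries.valuation_le_iff_coeff_lt_eq_zero k).1 hle _ (lt_add_one _))

/-- The rank one structure on the `t`-adic valuation for which `‖t‖ = b⁻¹`. -/
noncomputable abbrev rankOneLaurentSeries (k : Type*) [Field k] {b : ℝ≥0} (hb : 1 < b) :
    (Valued.v : Valuation (LaurentSeries k) ℤᵐ⁰).RankOne where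
  hom' := (WithZeroMulInt.toNNReal (zero_lt_one.trans hb).ne').comp
    MonoidWithZeroHom.ValueGroup₀.embedding
  strictMono' := (WithZeroMulInt.toNNReal_strictMono hb).comp
    MonoidWithZeroHom.ValueGroup₀.embedding_strictMono
  exists_val_nontrivial := ⟨HahnSeries.single 1 1, by
    rw [LaurentSeries.valuation_single_zpow]
    decide⟩

lemma norm_rankOneLaurentSeries {b : ℝ≥0} (hb : 1 < b) {f : LaurentSeries k} (hf : f ≠ 0) :
    letI := rankOneLaurentSeries k hb
    Valuation.norm (Valued.v : Valuation (LaurentSeries k) ℤᵐ⁰) f = (b : ℝ) ^ (-f.order) := by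
  change ((WithZeroMulInt.toNNReal (zero_lt_one.trans hb).ne'
    (MonoidWithZeroHom.ValueGroup₀.embedding (Valued.v.restrict f)) : ℝ≥0) : ℝ) = _
  rw [Valuation.embedding_restrict, valued_v_eq_exp_neg_order hf,
    WithZeroMulInt.toNNReal_neg_apply _ WithZero.exp_ne_zero, NNReal.coe_zpow]
  rfl

theorem ramification_mul_order_coeff_zero_minpoly {K : Type*} [Field K]
    [Algebra (LaurentSeries k) K] [Algebra.IsAlgebraic (LaurentSeries k) K]
    {v : AddValuation K (WithTop ℤ)} {e : ℕ} (he : 0 < e)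
    (hext : ∀ x : LaurentSeries k, x ≠ 0 →
      v (algebraMap (LaurentSeries k) K x) = ((e : ℤ) * x.order : ℤ))
    {μ : K} {m : ℤ} (hm : v μ = m) :
    e * ((minpoly (LaurentSeries k) μ).coeff 0).order =
      m * (minpoly (LaurentSeries k) μ).natDegree := by
  have hb : (1 : ℝ≥0) < 2 ^ e := one_lt_pow₀ one_lt_two he.ne'
  let := rankOneLaurentSeries k hb
  let := Valued.toNontriviallyNormedField (L := LaurentSeries k) (Γ₀ := ℤᵐ⁰)
  have norm_eq {x : LaurentSeries k} (hx : x ≠ 0) : ‖x‖ = (2 : ℝ) ^ (-(e * x.order)) := by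
    refine (norm_rankOneLaurentSeries hb hx).trans ?_
    rw [NNReal.coe_pow, NNReal.coe_ofNat, ← zpow_natCast, ← zpow_mul, mul_neg]
  have extends_norm (x : LaurentSeries k) :
      expAbsoluteValue v one_lt_two (algebraMap (LaurentSeries k) K x) = ‖x‖ := by
    by_cases hx : x = 0
    · simp only [hx, map_zero, norm_zero]
    · rw [norm_eq hx, expAbsoluteValue_apply, hext x hx, zpowNegTop_coe]
  have integral : IsIntegral (LaurentSeries k) μ := Algebra.IsIntegral.isIntegral μ
  have hμ : μ ≠ 0 := v.ne_top_iff.1 (hm ▸ WithTop.coe_ne_top)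
  have abs_eq_norm_rpow := (spectralNorm_unique_field_norm_ext extends_norm μ).trans
    (spectralNorm.spectralNorm_eq_norm_coeff_zero_rpow _ _ μ)
  have pow_eq : ((2 : ℝ) ^ (-m)) ^ (minpoly (LaurentSeries k) μ).natDegree =
      2 ^ (-(e * ((minpoly (LaurentSeries k) μ).coeff 0).order)) := by
    rw [← norm_eq (minpoly.coeff_zero_ne_zero integral hμ), ← zpowNegTop_coe, ← hm,
      ← expAbsoluteValue_apply v one_lt_two, abs_eq_norm_rpow, one_div,
      Real.rpow_inv_natCast_pow (norm_nonneg _) (minpoly.natDegree_pos integral).ne']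
  rw [← zpow_natCast, ← zpow_mul] at pow_eq
  have := zpow_right_injective₀ two_pos (by norm_num) pow_eq
  linarith

end NormOrder

section Residue

variable {k : Type} [Field k] {ι ι₁ ι₂ : Type} [Fintype ι] [Fintype ι₁] [Fintype ι₂]

lemma coeff_add_mul_of_le_orderTop {f g : LaurentSeries k} {r s : ℤ} (hf : r ≤ f.orderTop)
    (hg : s ≤ g.orderTop) : (f * g).coeff (r + s) = f.coeff r * g.coeff s := by
  rw [HahnSeries.coeff_mul]
  refine Finset.sum_eq_single (r, s) (fun ⟨i, j⟩ hij hne ↦ ?_) fun hrs ↦ ?_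
  · obtain hi | hj : i < r ∨ j < s := by
      by_contra! h
      have : i + j = r + s := (Finset.mem_antidiagonal.1 hij).2.2
      exact hne (Prod.ext (by dsimp only; lia) (by dsimp only; lia))
    · rw [HahnSeries.coeff_eq_zero_of_lt_orderTop ((WithTop.coe_lt_coe.2 hi).trans_le hf), zero_mul]
    · rw [HahnSeries.coeff_eq_zero_of_lt_orderTop ((WithTop.coe_lt_coe.2 hj).trans_le hg), mul_zero]
  · by_contra h
    exact hrs (Finset.mem_antidiagonal.2 ⟨left_ne_zero_of_mul h, right_ne_zero_of_mul h, rfl⟩)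

lemma diagQF_eq_sum_smul_sq (w : ι → k) (x : ι → LaurentSeries k) :
    diagQF (bcW w) x = ∑ i, w i • (x i * x i) := by
  simp only [diagQF, bcW, sq, LaurentSeries.algebraMap_apply, HahnSeries.C_mul_eq_smul]

lemma le_orderTop_diagQF_bcW (w : ι → k) {x : ι → LaurentSeries k} {s : ℤ}
    (hx : ∀ i, s ≤ (x i).orderTop) : ((2 * s : ℤ) : WithTop ℤ) ≤ (diagQF (bcW w) x).orderTop := by
  rw [HahnSeries.le_orderTop_iff_forall]
  intro j hj
  rw [diagQF_eq_sum_smul_sq, HahnSeries.coeff_sum]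
  refine Finset.sum_eq_zero fun i _ ↦ ?_
  rw [HahnSeries.coeff_smul, HahnSeries.coeff_eq_zero_of_lt_orderTop, smul_zero]
  refine hj.trans_le ?_
  rw [HahnSeries.orderTop_mul, two_mul, WithTop.coe_add]
  exact add_le_add (hx i) (hx i)

lemma coeff_diagQF_bcW (w : ι → k) {x : ι → LaurentSeries k} {s : ℤ}
    (hx : ∀ i, s ≤ (x i).orderTop) :
    (diagQF (bcW w) x).coeff (2 * s) = diagQF w fun i ↦ (x i).coeff s := by
  rw [diagQF_eq_sum_smul_sq, HahnSeries.coeff_sum]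
  refine Finset.sum_congr rfl fun i _ ↦ ?_
  rw [HahnSeries.coeff_smul, two_mul, coeff_add_mul_of_le_orderTop (hx i) (hx i), smul_eq_mul, sq]

lemma AnisotropicQF.exists_orderTop_diagQF_bcW {w : ι → k} (hw : AnisotropicQF w)
    {x : ι → LaurentSeries k} (hx : x ≠ 0) :
    ∃ s : ℤ, (∀ i, s ≤ (x i).orderTop) ∧
      (diagQF (bcW w) x).orderTop = ((2 * s : ℤ) : WithTop ℤ) := by
  obtain ⟨i₀, hi₀⟩ := Function.ne_iff.1 hx
  have : Nonempty ι := ⟨i₀⟩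
  obtain ⟨i, hi⟩ := Finite.exists_min fun i ↦ (x i).orderTop
  have hxi : x i ≠ 0 := fun h ↦ hi₀ (by simpa [h] using hi i₀)
  have hord : ((x i).order : WithTop ℤ) = (x i).orderTop :=
    HahnSeries.order_eq_orderTop_of_ne_zero hxi
  have hle j : ((x i).order : WithTop ℤ) ≤ (x j).orderTop := hord.trans_le (hi j)
  refine ⟨(x i).order, hle, le_antisymm (HahnSeries.orderTop_le_of_coeff_ne_zero ?_)
    (le_orderTop_diagQF_bcW w hle)⟩
  rw [coeff_diagQF_bcW w hle]
  exact fun h ↦ HahnSeries.coeff_order_eq_zero.not.2 hxi (congrFun (hw _ h) i)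

lemma AnisotropicQF.le_orderTop_of_le_orderTop_diagQF_bcW {w : ι → k} (hw : AnisotropicQF w)
    {x : ι → LaurentSeries k} {s : ℤ}
    (h : ((2 * s - 1 : ℤ) : WithTop ℤ) ≤ (diagQF (bcW w) x).orderTop) (i : ι) :
    s ≤ (x i).orderTop := by
  rcases eq_or_ne x 0 with rfl | hx
  · simp
  obtain ⟨r, hr, hord⟩ := hw.exists_orderTop_diagQF_bcW hx
  rw [hord, WithTop.coe_le_coe] at h
  exact (WithTop.coe_le_coe.2 (by lia)).trans (hr i)

/-- The form `q₁ ⊥ ⟨t⟩q₂` over `k((t))`. -/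
noncomputable def laurentOrthW (w₁ : ι₁ → k) (w₂ : ι₂ → k) : ι₁ ⊕ ι₂ → LaurentSeries k :=
  orthW (bcW w₁) (smulW (HahnSeries.single 1 1) (bcW w₂))

lemma diagQF_laurentOrthW (w₁ : ι₁ → k) (w₂ : ι₂ → k) (x : ι₁ ⊕ ι₂ → LaurentSeries k) :
    diagQF (laurentOrthW w₁ w₂) x =
      diagQF (bcW w₁) (x ∘ Sum.inl) + HahnSeries.single 1 1 * diagQF (bcW w₂) (x ∘ Sum.inr) := by
  simp [diagQF, laurentOrthW, orthW, smulW, Finset.mul_sum, mul_assoc]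

variable {w₁ : ι₁ → k} {w₂ : ι₂ → k}

lemma le_orderTop_single_one_mul_iff {n : ℤ} {f : LaurentSeries k} :
    (n : WithTop ℤ) ≤ (HahnSeries.single (1 : ℤ) (1 : k) * f).orderTop ↔
      ((n - 1 : ℤ) : WithTop ℤ) ≤ f.orderTop := by
  rw [HahnSeries.orderTop_mul, HahnSeries.orderTop_single one_ne_zero]
  induction f.orderTop with
  | top => simp
  | coe m => rw [← WithTop.coe_add, WithTop.coe_le_coe, WithTop.coe_le_coe, sub_le_iff_le_add']

/-- No cancellation occurs: the first summand has even order and the second odd order. -/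
lemma le_orderTop_diagQF_laurentOrthW_iff (hw₁ : AnisotropicQF w₁) (hw₂ : AnisotropicQF w₂)
    {x : ι₁ ⊕ ι₂ → LaurentSeries k} {n : ℤ} :
    (n : WithTop ℤ) ≤ (diagQF (laurentOrthW w₁ w₂) x).orderTop ↔
      (n : WithTop ℤ) ≤ (diagQF (bcW w₁) (x ∘ Sum.inl)).orderTop ∧
        ((n - 1 : ℤ) : WithTop ℤ) ≤ (diagQF (bcW w₂) (x ∘ Sum.inr)).orderTop := by
  rw [diagQF_laurentOrthW, ← le_orderTop_single_one_mul_iff, ← le_min_iff]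
  rcases lt_trichotomy (diagQF (bcW w₁) (x ∘ Sum.inl)).orderTop
    (HahnSeries.single 1 1 * diagQF (bcW w₂) (x ∘ Sum.inr)).orderTop with h | h | h
  · rw [HahnSeries.orderTop_add_eq_left h, min_eq_left h.le]
  · rcases eq_or_ne (x ∘ Sum.inl) 0 with h₁ | h₁
    · simp [h₁, diagQF_zero]
    rcases eq_or_ne (x ∘ Sum.inr) 0 with h₂ | h₂
    · simp [h₂, diagQF_zero]
    obtain ⟨r, -, hr⟩ := hw₁.exists_orderTop_diagQF_bcW h₁
    obtain ⟨s, -, hs⟩ := hw₂.exists_orderTop_diagQF_bcW h₂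
    rw [HahnSeries.orderTop_mul, HahnSeries.orderTop_single one_ne_zero, hr, hs, ← WithTop.coe_add,
      WithTop.coe_inj] at h
    lia
  · rw [HahnSeries.orderTop_add_eq_right h, min_eq_right h.le]

lemma AnisotropicQF.laurentOrthW (hw₁ : AnisotropicQF w₁) (hw₂ : AnisotropicQF w₂) :
    AnisotropicQF (laurentOrthW w₁ w₂) := by
  intro x hx
  have hle (j : ℤ) := (le_orderTop_diagQF_laurentOrthW_iff hw₁ hw₂ (x := x) (n := 2 * (j + 1))).1
    (by rw [hx, HahnSeries.orderTop_zero]; exact le_top)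
  have hvanish (i : ι₁ ⊕ ι₂) (j : ℤ) : ((j + 1 : ℤ) : WithTop ℤ) ≤ (x i).orderTop := by
    rcases i with i | i
    · exact hw₁.le_orderTop_of_le_orderTop_diagQF_bcW
        ((WithTop.coe_le_coe.2 (by lia)).trans (hle j).1) i
    · exact hw₂.le_orderTop_of_le_orderTop_diagQF_bcW (hle j).2 i
  refine funext fun i ↦ HahnSeries.ext (funext fun j ↦ ?_)
  exact HahnSeries.coeff_eq_zero_of_lt_orderTop
    ((WithTop.coe_lt_coe.2 (lt_add_one j)).trans_le (hvanish i j))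

lemma coeff_even_diagQF_laurentOrthW (hw₁ : AnisotropicQF w₁) (hw₂ : AnisotropicQF w₂)
    {x : ι₁ ⊕ ι₂ → LaurentSeries k} {s : ℤ}
    (hx : ((2 * s : ℤ) : WithTop ℤ) ≤ (diagQF (laurentOrthW w₁ w₂) x).orderTop) :
    (diagQF (laurentOrthW w₁ w₂) x).coeff (2 * s) =
      diagQF w₁ fun i ↦ (x (Sum.inl i)).coeff s := by
  obtain ⟨h₁, h₂⟩ := (le_orderTop_diagQF_laurentOrthW_iff hw₁ hw₂).1 hx
  have hx₁ := hw₁.le_orderTop_of_le_orderTop_diagQF_bcW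
    ((WithTop.coe_le_coe.2 (sub_one_lt _).le).trans h₁)
  have hx₂ := hw₂.le_orderTop_of_le_orderTop_diagQF_bcW h₂
  have hq₂ : (diagQF (bcW w₂) (x ∘ Sum.inr)).coeff (2 * s - 1) = 0 :=
    HahnSeries.coeff_eq_zero_of_lt_orderTop
      ((WithTop.coe_lt_coe.2 (sub_one_lt _)).trans_le (le_orderTop_diagQF_bcW w₂ hx₂))
  rw [diagQF_laurentOrthW, HahnSeries.coeff_add, HahnSeries.coeff_single_mul, hq₂, mul_zero,
    add_zero, coeff_diagQF_bcW w₁ hx₁]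
  rfl

lemma coeff_odd_diagQF_laurentOrthW (hw₁ : AnisotropicQF w₁) (hw₂ : AnisotropicQF w₂)
    {x : ι₁ ⊕ ι₂ → LaurentSeries k} {s : ℤ}
    (hx : ((2 * s + 1 : ℤ) : WithTop ℤ) ≤ (diagQF (laurentOrthW w₁ w₂) x).orderTop) :
    (diagQF (laurentOrthW w₁ w₂) x).coeff (2 * s + 1) =
      diagQF w₂ fun i ↦ (x (Sum.inr i)).coeff s := by
  obtain ⟨h₁, h₂⟩ := (le_orderTop_diagQF_laurentOrthW_iff hw₁ hw₂).1 hx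
  have hx₁ := hw₁.le_orderTop_of_le_orderTop_diagQF_bcW (s := s + 1)
    ((WithTop.coe_le_coe.2 (by lia)).trans h₁)
  have hx₂ := hw₂.le_orderTop_of_le_orderTop_diagQF_bcW (s := s)
    ((WithTop.coe_le_coe.2 (by lia)).trans h₂)
  have hq₁ : (diagQF (bcW w₁) (x ∘ Sum.inl)).coeff (2 * s + 1) = 0 :=
    HahnSeries.coeff_eq_zero_of_lt_orderTop
      ((WithTop.coe_lt_coe.2 (by lia)).trans_le (le_orderTop_diagQF_bcW w₁ hx₁))
  rw [diagQF_laurentOrthW, HahnSeries.coeff_add, HahnSeries.coeff_single_mul, hq₁, one_mul,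
    zero_add, add_sub_cancel_right, coeff_diagQF_bcW w₂ hx₂]
  rfl

section ResidueMap

/-- The `k`-linear map taking a vector of constants `v` to the coefficients of `t ^ s` in `T v`. -/
noncomputable def residueMap (T : (ι₁ → LaurentSeries k) →ₗ[LaurentSeries k] ι₂ → LaurentSeries k)
    (s : ℤ) : (ι₁ → k) →ₗ[k] ι₂ → k where
  toFun v i := (T (fun j ↦ HahnSeries.C (v j)) i).coeff s
  map_add' v v' := by
    have : (fun j ↦ HahnSeries.C ((v + v') j) : ι₁ → LaurentSeries k) =
        (fun j ↦ HahnSeries.C (v j)) + fun j ↦ HahnSeries.C (v' j) := funext fun j ↦ map_add _ _ _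
    rw [this, map_add]
    rfl
  map_smul' c v := by
    have : (fun j ↦ HahnSeries.C ((c • v) j) : ι₁ → LaurentSeries k) =
        (HahnSeries.C c : LaurentSeries k) • fun j ↦ HahnSeries.C (v j) :=
      funext fun j ↦ map_mul _ _ _
    rw [this, map_smul]
    funext i
    rw [Pi.smul_apply, smul_eq_mul, HahnSeries.C_mul_eq_smul]
    rfl

lemma diagQF_bcW_C (w : ι → k) (v : ι → k) :
    diagQF (bcW w) (fun i ↦ (HahnSeries.C (v i) : LaurentSeries k)) =
      HahnSeries.C (diagQF w v) := by
  simp [diagQF, bcW, LaurentSeries.algebraMap_apply]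

variable {w : ι → k} {b : LaurentSeries k} {s : ℤ}
  {T : (ι → LaurentSeries k) →ₗ[LaurentSeries k] ι₁ ⊕ ι₂ → LaurentSeries k}

lemma diagQF_residueMap_inl (hw₁ : AnisotropicQF w₁) (hw₂ : AnisotropicQF w₂)
    (hT : ∀ x, diagQF (laurentOrthW w₁ w₂) (T x) = b * diagQF (bcW w) x)
    (hb : ((2 * s : ℤ) : WithTop ℤ) ≤ b.orderTop) (v : ι → k) :
    diagQF w₁ (fun i ↦ residueMap T s v (Sum.inl i)) = b.coeff (2 * s) * diagQF w v := by
  have hTv := hT fun i ↦ HahnSeries.C (v i)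
  rw [diagQF_bcW_C, mul_comm, HahnSeries.C_mul_eq_smul] at hTv
  refine (coeff_even_diagQF_laurentOrthW hw₁ hw₂ ?_).symm.trans ?_
  · exact hTv ▸ hb.trans (HahnSeries.orderTop_le_orderTop_smul _ _)
  · rw [hTv, HahnSeries.coeff_smul, smul_eq_mul, mul_comm]

lemma diagQF_residueMap_inr (hw₁ : AnisotropicQF w₁) (hw₂ : AnisotropicQF w₂)
    (hT : ∀ x, diagQF (laurentOrthW w₁ w₂) (T x) = b * diagQF (bcW w) x)
    (hb : ((2 * s + 1 : ℤ) : WithTop ℤ) ≤ b.orderTop) (v : ι → k) :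
    diagQF w₂ (fun i ↦ residueMap T s v (Sum.inr i)) = b.coeff (2 * s + 1) * diagQF w v := by
  have hTv := hT fun i ↦ HahnSeries.C (v i)
  rw [diagQF_bcW_C, mul_comm, HahnSeries.C_mul_eq_smul] at hTv
  refine (coeff_odd_diagQF_laurentOrthW hw₁ hw₂ ?_).symm.trans ?_
  · exact hTv ▸ hb.trans (HahnSeries.orderTop_le_orderTop_smul _ _)
  · rw [hTv, HahnSeries.coeff_smul, smul_eq_mul, mul_comm]

end ResidueMap

lemma diagQF_laurentOrthW_inl (w₁ : ι₁ → k) (w₂ : ι₂ → k) (x : ι₁ → LaurentSeries k) :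
    diagQF (laurentOrthW w₁ w₂) (Sum.elim x 0) = diagQF (bcW w₁) x := by
  rw [diagQF_laurentOrthW, Sum.elim_comp_inl, Sum.elim_comp_inr, diagQF_zero, mul_zero, add_zero]

lemma diagQF_laurentOrthW_inr (w₁ : ι₁ → k) (w₂ : ι₂ → k) (x : ι₂ → LaurentSeries k) :
    diagQF (laurentOrthW w₁ w₂) (Sum.elim 0 x) = HahnSeries.single 1 1 * diagQF (bcW w₂) x := by
  rw [diagQF_laurentOrthW, Sum.elim_comp_inl, Sum.elim_comp_inr, diagQF_zero, zero_add]

lemma AnisotropicQF.injective_of_diagQF_eq_mul (hw₁ : AnisotropicQF w₁) {c : k} (hc : c ≠ 0)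
    {g : (ι₁ → k) →ₗ[k] ι₂ → k} (hg : ∀ v, diagQF w₂ (g v) = c * diagQF w₁ v) :
    Function.Injective g := by
  rw [← LinearMap.ker_eq_bot, LinearMap.ker_eq_bot']
  intro v hv
  have := hg v
  rw [hv, diagQF_zero, eq_comm] at this
  exact hw₁ v ((mul_eq_zero.1 this).resolve_left hc)

lemma qfEquiv_smulW_of_forall_diagQF_eq_mul (hw₁ : AnisotropicQF w₁) (hw₂ : AnisotropicQF w₂)
    {c : k} (hc : c ≠ 0) {g : (ι₁ → k) →ₗ[k] ι₂ → k} (hg : ∀ v, diagQF w₂ (g v) = c * diagQF w₁ v)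
    {g' : (ι₂ → k) →ₗ[k] ι₁ → k} (hg' : ∀ v, diagQF w₁ (g' v) = c * diagQF w₂ v) :
    QFEquiv k (smulW c w₁) w₂ := by
  have hinj := hw₁.injective_of_diagQF_eq_mul hc hg
  have hle := LinearMap.finrank_le_finrank_of_injective hinj
  have hle' := LinearMap.finrank_le_finrank_of_injective (hw₂.injective_of_diagQF_eq_mul hc hg')
  exact ⟨.ofInjectiveOfFinrankEq g hinj (hle.antisymm hle'), fun v ↦
    (hg v).trans (diagQF_smulW _ _ _).symm⟩

/-- Restricting the similitude to constant vectors, the residue of `⟨a⟩q₁` lands in `q₂` and that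
of `⟨at⟩q₂` in `q₁`, since `a` has odd order. -/
lemma exists_similar_of_odd_order (hw₁ : AnisotropicQF w₁) (hw₂ : AnisotropicQF w₂)
    {a : LaurentSeries k} (ha : Odd a.order)
    (h : QFEquiv (LaurentSeries k) (smulW a (laurentOrthW w₁ w₂)) (laurentOrthW w₁ w₂)) :
    ∃ c : k, c ≠ 0 ∧ QFEquiv k (smulW c w₁) w₂ := by
  obtain ⟨s, hs⟩ := ha
  obtain ⟨e, he⟩ := h
  have ha0 : a ≠ 0 := by
    rintro rfl
    rw [HahnSeries.order_zero] at hs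
    lia
  have horder : a.orderTop = ((2 * s + 1 : ℤ) : WithTop ℤ) := by
    rw [← hs, HahnSeries.order_eq_orderTop_of_ne_zero ha0]
  have hc : a.coeff (2 * s + 1) ≠ 0 := HahnSeries.coeff_orderTop_ne horder
  have htorder : ((2 * (s + 1) : ℤ) : WithTop ℤ) ≤ (HahnSeries.single 1 1 * a).orderTop := by
    rw [le_orderTop_single_one_mul_iff, horder, WithTop.coe_le_coe]
    lia
  have htcoeff : (HahnSeries.single 1 1 * a).coeff (2 * (s + 1)) = a.coeff (2 * s + 1) := by
    rw [HahnSeries.coeff_single_mul, one_mul]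
    congr 1
    lia
  let glue := (LinearEquiv.sumArrowLequivProdArrow ι₁ ι₂ (LaurentSeries k) (LaurentSeries k)).symm
  have he₁ (x) : diagQF (laurentOrthW w₁ w₂) (e (glue (x, 0))) = a * diagQF (bcW w₁) x := by
    rw [he, diagQF_smulW, ← diagQF_laurentOrthW_inl w₁ w₂]
    rfl
  have he₂ (x) : diagQF (laurentOrthW w₁ w₂) (e (glue (0, x))) =
      HahnSeries.single 1 1 * a * diagQF (bcW w₂) x := by
    rw [he, diagQF_smulW, mul_right_comm, mul_comm, ← diagQF_laurentOrthW_inr w₁ w₂]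
    rfl
  have hg := diagQF_residueMap_inr hw₁ hw₂
    (T := e.toLinearMap ∘ₗ glue.toLinearMap ∘ₗ LinearMap.inl _ _ _) he₁ horder.ge
  have hg' := diagQF_residueMap_inl hw₁ hw₂
    (T := e.toLinearMap ∘ₗ glue.toLinearMap ∘ₗ LinearMap.inr _ _ _) he₂ htorder
  rw [htcoeff] at hg'
  exact ⟨_, hc, qfEquiv_smulW_of_forall_diagQF_eq_mul hw₁ hw₂ hc
    (g := LinearMap.funLeft k k Sum.inr ∘ₗ residueMap _ s)
    (g' := LinearMap.funLeft k k Sum.inl ∘ₗ residueMap _ (s + 1)) hg hg'⟩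

end Residue

lemma algebraMap_algebraMap_laurentSeries {k K : Type*} [Field k] [Field K] [Algebra k K]
    [Algebra (LaurentSeries k) K] [IsScalarTower k (LaurentSeries k) K] (c : k) :
    algebraMap (LaurentSeries k) K (algebraMap k (LaurentSeries k) c) = algebraMap k K c := by
  -- The scalar tower is stated for the coefficientwise action of `k` on `k((t))`.
  have hc : algebraMap k (LaurentSeries k) c = c • 1 := by
    rw [LaurentSeries.algebraMap_apply, ← HahnSeries.C_mul_eq_smul, mul_one]
  rw [Algebra.algebraMap_eq_smul_one, hc, smul_assoc, one_smul, Algebra.algebraMap_eq_smul_one]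

lemma bcW_laurentOrthW {k K : Type} [Field k] [Field K] [Algebra k K] [Algebra (LaurentSeries k) K]
    [IsScalarTower k (LaurentSeries k) K] {ι₁ ι₂ : Type} (w₁ : ι₁ → k) (w₂ : ι₂ → k) :
    bcW (K := K) (laurentOrthW w₁ w₂) = orthW (fun i ↦ algebraMap k K (w₁ i))
      fun j ↦ algebraMap (LaurentSeries k) K (HahnSeries.single 1 1) * algebraMap k K (w₂ j) := by
  funext i
  rcases i with i | i <;>
    simp [bcW, laurentOrthW, orthW, smulW, algebraMap_algebraMap_laurentSeries]

/-- for anisotropic forms `q₁, q₂` over `k` that are not similar, and an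
odd-degree extension `K` of `F = k((t))` with discrete valuation `v` extending the
`t`-adic valuation (ramification index `e`), every similarity factor of
`(q₁ ⊥ ⟨t⟩q₂)_K` has even valuation: for `μ ∈ Kˣ` of odd valuation,
`⟨μ⟩·(q₁ ⊥ ⟨t⟩q₂)_K ≇ (q₁ ⊥ ⟨t⟩q₂)_K`. -/
theorem stmt_14 {k K : Type} [Field k] [Field K]
    [Algebra k K] [Algebra (LaurentSeries k) K] [IsScalarTower k (LaurentSeries k) K]
    [FiniteDimensional (LaurentSeries k) K]
    (hchar : (2 : k) ≠ 0)
    (hodd : Odd (Module.finrank (LaurentSeries k) K))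
    {n₁ n₂ : ℕ} (d₁ : Fin n₁ → k) (d₂ : Fin n₂ → k)
    (hd₁ : ∀ i, d₁ i ≠ 0) (hd₂ : ∀ j, d₂ j ≠ 0)
    (han₁ : AnisotropicQF d₁) (han₂ : AnisotropicQF d₂)
    (hnotsim : ¬∃ ν : k, ν ≠ 0 ∧ QFEquiv k (smulW ν d₁) d₂)
    (v : AddValuation K (WithTop ℤ)) (e : ℕ) (he : 0 < e)
    (hext : ∀ x : LaurentSeries k, x ≠ 0 →
      v (algebraMap (LaurentSeries k) K x) = ((e : ℤ) * x.order : ℤ)) :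
    ∀ μ : K, μ ≠ 0 → ∀ m : ℤ, v μ = (m : ℤ) → Odd m →
      ¬ QFEquiv K
        (smulW μ (orthW (fun i => algebraMap k K (d₁ i))
          (fun j => algebraMap (LaurentSeries k) K (HahnSeries.single (1 : ℤ) (1 : k)) *
            algebraMap k K (d₂ j))))
        (orthW (fun i => algebraMap k K (d₁ i))
          (fun j => algebraMap (LaurentSeries k) K (HahnSeries.single (1 : ℤ) (1 : k)) *
            algebraMap k K (d₂ j))) := by
  intro μ hμ m hm hmodd hiso
  have two_ne_zero : (2 : LaurentSeries k) ≠ 0 := by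
    simpa only [map_ofNat] using (map_ne_zero (algebraMap k (LaurentSeries k))).2 hchar
  rw [← bcW_laurentOrthW] at hiso
  have norm_similar := QFEquiv.smulW_neg_coeff_zero_minpoly two_ne_zero hodd
    (han₁.laurentOrthW han₂) hμ hiso
  have odd_degree : Odd ((minpoly (LaurentSeries k) μ).natDegree : ℤ) :=
    (Int.odd_coe_nat _).2 (hodd.of_dvd_nat (minpoly.degree_dvd (.of_finite _ μ)))
  have odd_norm_order : Odd ((minpoly (LaurentSeries k) μ).coeff 0).order :=
    (Int.odd_mul.1 (ramification_mul_order_coeff_zero_minpoly he hext hm ▸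
      hmodd.mul odd_degree)).2
  exact hnotsim (exists_similar_of_odd_order han₁ han₂
    (HahnSeries.order_neg (f := (minpoly (LaurentSeries k) μ).coeff 0) ▸ odd_norm_order)
    norm_similar)
end
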